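/- arXiv:1109.1836 — 2 statements merged into one kernel-verified Lean document; each statement's English description precedes it below -/
import Mathlib

section
/- Let n ≥ 1, s > 0, q ∈ [1,∞], and p, p₁ ∈ [1,∞) with p < p₁ ≤ 2p and s > n(2/p₁ − 1/p). Then there is a constant C > 0 such that for every Schwartz function u on ℝⁿ, ‖u²‖_{B^s_{p,q}} ≤ C ‖u‖²_{B^s_{p₁,q}}. -/
open MeasureTheory Real Filter
open scoped ENNReal FourierTransform

noncomputable section

/-- `ℝⁿ` as a Euclidean space. -/
abbrev Rn (n : ℕ) : Type := EuclideanSpace ℝ (Fin n)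

variable {n : ℕ}

/-- The Fourier transform of a real-valued Schwartz function, viewed as a ℂ-valued function. -/
def ftC (f : SchwartzMap (Rn n) ℝ) : Rn n → ℂ :=
  𝓕 (fun x => (f x : ℂ))

/-- `ψ₀` is a Littlewood–Paley function: an even, radial Schwartz function whose Fourier
transform is nonnegative, supported in the annulus `{ξ : 1/2 < ‖ξ‖ < 2}`, and satisfies
`∑_{j ∈ ℤ} ψ̂₀(2^{-j} ξ) = 1` for `ξ ≠ 0`. -/
structure IsLPF (n : ℕ) (ψ₀ : SchwartzMap (Rn n) ℝ) : Prop where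
  even : ∀ x : Rn n, ψ₀ (-x) = ψ₀ x
  radial : ∀ x y : Rn n, ‖x‖ = ‖y‖ → ψ₀ x = ψ₀ y
  ft_im : ∀ ξ : Rn n, (ftC ψ₀ ξ).im = 0
  ft_nonneg : ∀ ξ : Rn n, 0 ≤ (ftC ψ₀ ξ).re
  ft_supp : ∀ ξ : Rn n, ftC ψ₀ ξ ≠ 0 → 1/2 < ‖ξ‖ ∧ ‖ξ‖ < 2
  ft_sum : ∀ ξ : Rn n, ξ ≠ 0 → HasSum (fun j : ℤ => ftC ψ₀ ((2:ℝ) ^ (-j) • ξ)) 1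

/-- The Littlewood–Paley kernel `ψ_j(x) = 2^{jn} ψ₀(2^j x)`, whose Fourier transform is
`ψ̂₀(2^{-j} ξ)`. -/
def lpKernel (ψ₀ : SchwartzMap (Rn n) ℝ) (j : ℤ) (x : Rn n) : ℝ :=
  (2:ℝ) ^ (j * (n:ℤ)) * ψ₀ ((2:ℝ) ^ j • x)

/-- The Littlewood–Paley projection `Δ_j f = ψ_j ∗ f`. -/
def lpProj (ψ₀ : SchwartzMap (Rn n) ℝ) (j : ℤ) (f : Rn n → ℝ) : Rn n → ℝ :=
  MeasureTheory.convolution (lpKernel ψ₀ j) f (ContinuousLinearMap.mul ℝ ℝ) volume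

/-- `S_j f = ∑_{m ≤ j} Δ_m f`, the low-frequency cutoff; this is the L² function whose
Fourier transform is `(∑_{m ≤ j} ψ̂₀(2^{-m} ξ)) f̂(ξ)`. -/
def lowProj (ψ₀ : SchwartzMap (Rn n) ℝ) (j : ℤ) (f : Rn n → ℝ) (x : Rn n) : ℝ :=
  ∑' m : ℤ, if m ≤ j then lpProj ψ₀ m f x else 0

/-- `Ψ` is the low-frequency piece of the Littlewood–Paley decomposition:
`Ψ̂ = 1 − ∑_{k ≥ 0} ψ̂_k`. -/
def IsLowPiece (ψ₀ Ψ : SchwartzMap (Rn n) ℝ) : Prop :=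
  ∀ ξ : Rn n, ftC Ψ ξ = 1 - ∑' k : ℕ, ftC ψ₀ ((2:ℝ) ^ (-(k:ℤ)) • ξ)

/-- The inhomogeneous Besov norm `‖f‖_{B^s_{p,q}}`, valued in `[0,∞]`:
`‖Ψ∗f‖_{L^p} + (∑_{j ≥ 0} (2^{js} ‖Δ_j f‖_{L^p})^q)^{1/q}`, with the supremum over `j`
replacing the `ℓ^q` sum when `q = ∞`. -/
def besovNorm (ψ₀ Ψ : SchwartzMap (Rn n) ℝ) (s : ℝ) (p q : ℝ≥0∞) (f : Rn n → ℝ) : ℝ≥0∞ :=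
  eLpNorm (MeasureTheory.convolution (fun x => Ψ x) f (ContinuousLinearMap.mul ℝ ℝ) volume)
      p volume +
    (if q = ∞ then
      ⨆ j : ℕ, ENNReal.ofReal ((2:ℝ) ^ ((j:ℝ) * s)) * eLpNorm (lpProj ψ₀ (j:ℤ) f) p volume
    else
      (∑' j : ℕ, (ENNReal.ofReal ((2:ℝ) ^ ((j:ℝ) * s)) *
        eLpNorm (lpProj ψ₀ (j:ℤ) f) p volume) ^ q.toReal) ^ (1 / q.toReal))

/-- The heat semigroup `e^{tΔ} f = h_t ∗ f` with `h_t(x) = (4πt)^{-n/2} e^{-‖x‖²/(4t)}`. -/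
def heatOp (n : ℕ) (t : ℝ) (f : Rn n → ℝ) : Rn n → ℝ :=
  MeasureTheory.convolution
    (fun x : Rn n => (4 * π * t) ^ (-(n:ℝ)/2) * Real.exp (-‖x‖^2 / (4*t))) f
    (ContinuousLinearMap.mul ℝ ℝ) volume

/-- The partial derivative `∂_{x_i} f`. -/
def pderiv' (i : Fin n) (f : Rn n → ℝ) (x : Rn n) : ℝ :=
  fderiv ℝ f x (EuclideanSpace.single i 1)

/-- The Laplacian `Δf = ∑ᵢ ∂²_{x_i} f`. -/
def lapl (f : Rn n → ℝ) (x : Rn n) : ℝ :=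
  ∑ i : Fin n, pderiv' i (pderiv' i f) x

/-- complexification -/
def toC (f : SchwartzMap (Rn n) ℝ) : SchwartzMap (Rn n) ℂ :=
  f.postcompCLM Complex.ofRealCLM

lemma toC_apply (f : SchwartzMap (Rn n) ℝ) (x : Rn n) : toC f x = (f x : ℂ) := rfl

lemma ftC_eq (f : SchwartzMap (Rn n) ℝ) (ξ : Rn n) : ftC f ξ = 𝓕 (toC f) ξ := rfl

lemma ftC_inj {f g : SchwartzMap (Rn n) ℝ} (h : ∀ ξ, ftC f ξ = ftC g ξ) : f = g := by
  have h1 : 𝓕 (toC f) = 𝓕 (toC g) := by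
    ext ξ
    exact h ξ
  have h2 : toC f = toC g := by
    have := congrArg (fun F => 𝓕⁻ F) h1
    simpa using this
  ext x
  have := congrArg (fun F : SchwartzMap (Rn n) ℂ => F x) h2
  simpa [toC_apply] using this

lemma ftC_add (f g : SchwartzMap (Rn n) ℝ) (ξ : Rn n) : ftC (f + g) ξ = ftC f ξ + ftC g ξ := by
  have : toC (f + g) = toC f + toC g := by
    ext x; simp [toC_apply]
  rw [ftC_eq, this, FourierTransform.fourier_add]; rfl

/-- convolution of real Schwartz functions -/
def sconv (f g : SchwartzMap (Rn n) ℝ) : SchwartzMap (Rn n) ℝ :=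
  (SchwartzMap.convolution (ContinuousLinearMap.mul ℂ ℂ) (toC f) (toC g)).postcompCLM Complex.reCLM

lemma conv_toC (f g : SchwartzMap (Rn n) ℝ) (x : Rn n) :
    MeasureTheory.convolution (toC f) (toC g) (ContinuousLinearMap.mul ℂ ℂ) volume x =
    ((MeasureTheory.convolution f g (ContinuousLinearMap.mul ℝ ℝ) volume x : ℝ) : ℂ) := by
  simp only [MeasureTheory.convolution, toC_apply, ContinuousLinearMap.mul_apply']
  rw [← integral_complex_ofReal]
  simp

lemma toC_sconv (f g : SchwartzMap (Rn n) ℝ) :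
    toC (sconv f g) = SchwartzMap.convolution (ContinuousLinearMap.mul ℂ ℂ) (toC f) (toC g) := by
  ext x
  rw [toC_apply, sconv, SchwartzMap.postcompCLM_apply, SchwartzMap.convolution_apply, conv_toC]
  simp

lemma sconv_apply (f g : SchwartzMap (Rn n) ℝ) (x : Rn n) :
    sconv f g x = MeasureTheory.convolution f g (ContinuousLinearMap.mul ℝ ℝ) volume x := by
  rw [sconv, SchwartzMap.postcompCLM_apply, SchwartzMap.convolution_apply, conv_toC]
  simp

lemma sconv_coe (f g : SchwartzMap (Rn n) ℝ) :
    (sconv f g : Rn n → ℝ) = MeasureTheory.convolution f g (ContinuousLinearMap.mul ℝ ℝ) volume :=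
  funext (sconv_apply f g)

lemma ftC_sconv (f g : SchwartzMap (Rn n) ℝ) (ξ : Rn n) :
    ftC (sconv f g) ξ = ftC f ξ * ftC g ξ := by
  rw [ftC_eq, toC_sconv, SchwartzMap.fourier_convolution]
  rfl

/-- product of real Schwartz functions -/
def smulS (f g : SchwartzMap (Rn n) ℝ) : SchwartzMap (Rn n) ℝ :=
  SchwartzMap.pairing (ContinuousLinearMap.mul ℝ ℝ) f g

lemma smulS_apply (f g : SchwartzMap (Rn n) ℝ) (x : Rn n) : smulS f g x = f x * g x := rfl

lemma ftC_smulS (f g : SchwartzMap (Rn n) ℝ) (ξ : Rn n) :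
    ftC (smulS f g) ξ = ∫ t, ftC f t * ftC g (ξ - t) := by
  let C := SchwartzMap.convolution (ContinuousLinearMap.mul ℂ ℂ) (𝓕 (toC f)) (𝓕 (toC g))
  have h1 : 𝓕⁻ C = toC (smulS f g) := by
    ext x
    have e1 : ∀ F : SchwartzMap (Rn n) ℂ, 𝓕⁻ F x = 𝓕 F (-x) := by
      intro F
      rw [SchwartzMap.fourierInv_apply_eq]; rfl
    have e2 : ∀ F : SchwartzMap (Rn n) ℂ, 𝓕 (𝓕 F) (-x) = F x := by
      intro F
      rw [← e1]; simp
    rw [e1, SchwartzMap.fourier_convolution, SchwartzMap.pairing_apply_apply, e2, e2]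
    simp [toC_apply, smulS_apply]
  have h2 : 𝓕 (toC (smulS f g)) = C := by rw [← h1]; simp
  rw [ftC_eq, h2, SchwartzMap.convolution_apply]
  rfl

lemma ftC_smulS_supp (f : SchwartzMap (Rn n) ℝ) (R : ℝ) (hf : ∀ ξ, R ≤ ‖ξ‖ → ftC f ξ = 0)
    (ξ : Rn n) (hξ : 2 * R ≤ ‖ξ‖) : ftC (smulS f f) ξ = 0 := by
  rw [ftC_smulS]
  have : ∀ t, ftC f t * ftC f (ξ - t) = 0 := by
    intro t
    by_cases h : R ≤ ‖t‖
    · simp [hf t h]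
    · have : R ≤ ‖ξ - t‖ := by
        have := norm_sub_norm_le ξ t
        linarith
      simp [hf _ this]
  simp [this]

/-- dilation -/
def dil (φ : SchwartzMap (Rn n) ℝ) (j : ℤ) : SchwartzMap (Rn n) ℝ :=
  (2:ℝ) ^ (j * (n:ℤ)) • SchwartzMap.compCLMOfContinuousLinearEquiv ℝ
    (ContinuousLinearEquiv.smulLeft (Units.mk0 ((2:ℝ) ^ j) (by positivity))) φ

lemma dil_apply (φ : SchwartzMap (Rn n) ℝ) (j : ℤ) (x : Rn n) : dil φ j x = lpKernel φ j x := rfl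

lemma dil_coe (φ : SchwartzMap (Rn n) ℝ) (j : ℤ) : (dil φ j : Rn n → ℝ) = lpKernel φ j := rfl

lemma ftC_dil (φ : SchwartzMap (Rn n) ℝ) (j : ℤ) (ξ : Rn n) :
    ftC (dil φ j) ξ = ftC φ ((2:ℝ) ^ (-j) • ξ) := by
  have h2 : (0:ℝ) < 2 ^ j := by positivity
  unfold ftC
  rw [Real.fourier_eq, Real.fourier_eq]
  have := Measure.integral_comp_smul (volume : Measure (Rn n))
    (fun v => 𝐞 (-inner ℝ v ((2:ℝ) ^ (-j) • ξ)) • (φ v : ℂ)) ((2:ℝ)^j)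
  have e : ∀ v : Rn n, 𝐞 (-inner ℝ v ξ) • ((dil φ j v : ℝ) : ℂ) =
     ((2:ℝ) ^ (j * (n:ℤ)) : ℝ) • (fun v => 𝐞 (-inner ℝ v ((2:ℝ) ^ (-j) • ξ)) • (φ v : ℂ)) ((2:ℝ)^j • v) := by
    intro v
    rw [dil_apply, lpKernel]
    simp only [inner_smul_left, inner_smul_right]
    have : (2:ℝ) ^ (-j) * ((starRingEnd ℝ) (2 ^ j) * inner ℝ v ξ) = inner ℝ v ξ := by
      simp only [conj_trivial, zpow_neg]; field_simp
    rw [this]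
    simp only [Circle.smul_def, smul_eq_mul, Complex.real_smul]
    push_cast
    ring
  simp_rw [e]
  rw [integral_smul, this, smul_smul]
  have : (2:ℝ) ^ (j * (n:ℤ)) * |((2 ^ j : ℝ) ^ Module.finrank ℝ (Rn n))⁻¹| = 1 := by
    rw [abs_of_pos (by positivity), finrank_euclideanSpace_fin, zpow_mul, zpow_natCast]
    field_simp
  rw [this, one_smul]

lemma lpProj_eq (φ u : SchwartzMap (Rn n) ℝ) (j : ℤ) :
    lpProj φ j u = (sconv (dil φ j) u : Rn n → ℝ) := by
  rw [sconv_coe]; rfl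

section LP
variable {ψ₀ Ψ : SchwartzMap (Rn n) ℝ} 

lemma ft_psi_zero (hψ : IsLPF n ψ₀) (ξ : Rn n) (h : ‖ξ‖ ≤ 1/2 ∨ 2 ≤ ‖ξ‖) : ftC ψ₀ ξ = 0 := by
  by_contra h'
  have := hψ.ft_supp ξ h'
  rcases h with h | h <;> linarith

lemma norm_scale (j : ℤ) (ξ : Rn n) : ‖(2:ℝ)^j • ξ‖ = 2^j * ‖ξ‖ := by
  rw [norm_smul, Real.norm_of_nonneg (by positivity)]

lemma ft_Psi_one (hψ : IsLPF n ψ₀) (hΨ : IsLowPiece ψ₀ Ψ) (ξ : Rn n) (h : ‖ξ‖ ≤ 1/2) :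
    ftC Ψ ξ = 1 := by
  rw [hΨ ξ]
  have : ∀ k : ℕ, ftC ψ₀ ((2:ℝ) ^ (-(k:ℤ)) • ξ) = 0 := by
    intro k
    apply ft_psi_zero hψ
    left
    rw [norm_scale]
    have : (2:ℝ)^(-(k:ℤ)) ≤ 1 := zpow_le_one_of_nonpos₀ (by norm_num) (by simp)
    nlinarith [norm_nonneg ξ]
  rw [tsum_congr this]; simp

lemma psi_summable (hψ : IsLPF n ψ₀) (ξ : Rn n) :
    Summable (fun k : ℕ => ftC ψ₀ ((2:ℝ) ^ (-(k:ℤ)) • ξ)) := by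
  by_cases h : ξ = 0
  · subst h
    have : ∀ k : ℕ, ftC ψ₀ ((2:ℝ) ^ (-(k:ℤ)) • (0 : Rn n)) = 0 := by
      intro k; apply ft_psi_zero hψ; simp
    simp only [this]; exact summable_zero
  · exact (hψ.ft_sum ξ h).summable.comp_injective (i := fun k : ℕ => (k : ℤ)) Nat.cast_injective

lemma ft_Psi_zero (hψ : IsLPF n ψ₀) (hΨ : IsLowPiece ψ₀ Ψ) (ξ : Rn n) (h : 1 ≤ ‖ξ‖) :
    ftC Ψ ξ = 0 := by
  have h0 : ξ ≠ 0 := by rintro rfl; norm_num at h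
  rw [hΨ ξ]
  have h1 := hψ.ft_sum ξ h0
  have h2 : HasSum (fun k : ℕ => ftC ψ₀ ((2:ℝ) ^ (-(k:ℤ)) • ξ)) 1 := by
    refine (Function.Injective.hasSum_iff (g := fun k : ℕ => (k : ℤ)) Nat.cast_injective ?_).2 h1
    intro j hj
    apply ft_psi_zero hψ
    right
    have hj' : j < 0 := by
      by_contra hc
      exact hj ⟨j.toNat, by simp; omega⟩
    rw [norm_scale]
    have : (2:ℝ)^(1:ℤ) ≤ (2:ℝ)^(-j) := zpow_le_zpow_right₀ (by norm_num) (by omega)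
    norm_num at this
    norm_num
    nlinarith
  rw [h2.tsum_eq]; simp

lemma ft_Psi_half (hψ : IsLPF n ψ₀) (hΨ : IsLowPiece ψ₀ Ψ) (ξ : Rn n) :
    ftC Ψ ((2:ℝ)^(-1:ℤ) • ξ) = ftC Ψ ξ + ftC ψ₀ ξ := by
  rw [hΨ, hΨ, (psi_summable hψ ξ).tsum_eq_zero_add]
  have : ∀ k : ℕ, (2:ℝ) ^ (-(k:ℤ)) • (2:ℝ)^(-1:ℤ) • ξ = (2:ℝ) ^ (-((k+1:ℕ):ℤ)) • ξ := by
    intro k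
    rw [smul_smul, ← zpow_add₀ (by norm_num)]
    congr 2
    push_cast; ring
  simp_rw [this]
  simp
  ring

lemma dil_Psi_one (hψ : IsLPF n ψ₀) (hΨ : IsLowPiece ψ₀ Ψ) : dil Ψ 1 = Ψ + ψ₀ := by
  apply ftC_inj
  intro ξ
  rw [ftC_dil, ftC_add, ft_Psi_half hψ hΨ]

lemma dil_dil (φ : SchwartzMap (Rn n) ℝ) (i j : ℤ) : dil (dil φ i) j = dil φ (i + j) := by
  ext x
  simp only [dil_apply, lpKernel, smul_smul]
  rw [← mul_assoc, ← zpow_add₀ (by norm_num), ← zpow_add₀ (by norm_num)]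
  congr 2
  ring

lemma dil_add (φ φ' : SchwartzMap (Rn n) ℝ) (j : ℤ) : dil (φ + φ') j = dil φ j + dil φ' j := by
  ext x
  simp [dil_apply, lpKernel, mul_add]

lemma dil_zero (φ : SchwartzMap (Rn n) ℝ) : dil φ 0 = φ := by
  ext x
  simp [dil_apply, lpKernel]

lemma dil_Psi_succ (hψ : IsLPF n ψ₀) (hΨ : IsLowPiece ψ₀ Ψ) (j : ℤ) :
    dil Ψ (j + 1) = dil Ψ j + dil ψ₀ j := by
  rw [add_comm, ← dil_dil, dil_Psi_one hψ hΨ, dil_add]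

lemma sconv_add (f g u : SchwartzMap (Rn n) ℝ) : sconv (f + g) u = sconv f u + sconv g u := by
  apply ftC_inj; intro ξ; simp only [ftC_sconv, ftC_add]; ring

lemma Psi_succ (hψ : IsLPF n ψ₀) (hΨ : IsLowPiece ψ₀ Ψ) (j : ℤ) (u : SchwartzMap (Rn n) ℝ) :
    sconv (dil Ψ (j + 1)) u = sconv (dil Ψ j) u + sconv (dil ψ₀ j) u := by
  rw [dil_Psi_succ hψ hΨ, sconv_add]

lemma reproduce (hψ : IsLPF n ψ₀) (hΨ : IsLowPiece ψ₀ Ψ) (φ : SchwartzMap (Rn n) ℝ)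
    (hφ : ∀ ξ, 2 ≤ ‖ξ‖ → ftC φ ξ = 0) (j : ℤ) (u : SchwartzMap (Rn n) ℝ) :
    sconv (dil Ψ (j + 2)) (sconv (dil φ j) u) = sconv (dil φ j) u := by
  apply ftC_inj
  intro ξ
  simp only [ftC_sconv, ftC_dil]
  by_cases h : 2 ≤ ‖(2:ℝ)^(-j) • ξ‖
  · rw [hφ _ h]; ring
  · rw [ft_Psi_one hψ hΨ, one_mul]
    rw [norm_scale] at h ⊢
    have : (2:ℝ)^(-(j+2)) = 2^(-j) * (1/4) := by
      rw [neg_add, zpow_add₀ (by norm_num)]; norm_num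
    rw [this]; linarith

lemma square_low (hψ : IsLPF n ψ₀) (hΨ : IsLowPiece ψ₀ Ψ) (k : ℤ) (u : SchwartzMap (Rn n) ℝ) :
    sconv (dil ψ₀ (k + 2)) (smulS (sconv (dil Ψ k) u) (sconv (dil Ψ k) u)) = 0 := by
  apply ftC_inj
  intro ξ
  have h0 : ftC (0 : SchwartzMap (Rn n) ℝ) ξ = 0 := by
    have := ftC_add (0 : SchwartzMap (Rn n) ℝ) 0 ξ
    simpa using this
  rw [h0, ftC_sconv, ftC_dil]
  by_cases h : ‖ξ‖ ≤ 2^(k+1)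
  · rw [ft_psi_zero hψ, zero_mul]
    left
    rw [norm_scale]
    calc (2:ℝ)^(-(k+2)) * ‖ξ‖ ≤ (2:ℝ)^(-(k+2)) * 2^(k+1) := by gcongr
      _ = 1/2 := by rw [← zpow_add₀ (by norm_num)]; ring_nf; norm_num
  · rw [ftC_smulS_supp _ (2^k), mul_zero]
    · intro η hη
      rw [ftC_sconv, ftC_dil, ft_Psi_zero hψ hΨ, zero_mul]
      rw [norm_scale]
      calc (1:ℝ) = (2:ℝ)^(-k) * 2^k := by rw [← zpow_add₀ (by norm_num)]; simp
        _ ≤ _ := by gcongr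
    · rw [zpow_add₀ (by norm_num)] at h
      norm_num at h
      linarith

lemma integral_Psi (hψ : IsLPF n ψ₀) (hΨ : IsLowPiece ψ₀ Ψ) : ∫ x, Ψ x = 1 := by
  have := ft_Psi_one hψ hΨ 0 (by simp)
  rw [ftC, Real.fourier_eq] at this
  simp only [inner_zero_right, neg_zero, AddChar.map_zero_eq_one, one_smul] at this
  rw [integral_complex_ofReal] at this
  exact_mod_cast this
end LP

lemma jensen_aux {α : Type*} [MeasurableSpace α] (μ : Measure α) (g : α → ℝ≥0∞)
    (hg : AEMeasurable g μ) (q : ℝ) (hq : 1 ≤ q) :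
    (∫⁻ x, g x ∂μ) ^ q ≤ μ Set.univ ^ (q - 1) * ∫⁻ x, g x ^ q ∂μ := by
  rcases hq.eq_or_lt with rfl | hq
  · simp
  have hc := Real.HolderConjugate.conjExponent hq
  have h := ENNReal.lintegral_mul_le_Lp_mul_Lq μ hc hg (aemeasurable_const (b := (1:ℝ≥0∞)))
  have h0 : 0 < q := by linarith
  simp only [Pi.mul_apply, mul_one, ENNReal.one_rpow, lintegral_const, one_mul] at h
  calc (∫⁻ x, g x ∂μ) ^ q ≤ _ := ENNReal.rpow_le_rpow h h0.le
    _ = _ := by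
      rw [ENNReal.mul_rpow_of_nonneg _ _ h0.le, ← ENNReal.rpow_mul, ← ENNReal.rpow_mul,
        one_div_mul_cancel h0.ne', ENNReal.rpow_one, mul_comm]
      congr 2
      unfold Real.conjExponent
      have : q - 1 ≠ 0 := by linarith
      field_simp

lemma seq_aux (w a : ℕ → ℝ≥0∞) (q : ℝ) (hq : 1 ≤ q) :
    ∑' k, (∑' j, w j * a (k + j)) ^ q ≤ (∑' j, w j) ^ q * ∑' k, a k ^ q := by
  let μ : Measure ℕ := Measure.count.withDensity w
  have hi : ∀ g : ℕ → ℝ≥0∞, ∫⁻ j, g j ∂μ = ∑' j, w j * g j := by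
    intro g
    rw [lintegral_withDensity_eq_lintegral_mul _ (by fun_prop) (by fun_prop), lintegral_count]
    rfl
  have hu : μ Set.univ = ∑' j, w j := by
    rw [← lintegral_one, hi]; simp
  have h1 : ∀ k, (∑' j, w j * a (k + j)) ^ q ≤
      (∑' j, w j) ^ (q - 1) * ∑' j, w j * a (k + j) ^ q := by
    intro k
    have := jensen_aux μ (fun j => a (k + j)) (by fun_prop) q hq
    rwa [hi, hi, hu] at this
  calc _ ≤ ∑' k, (∑' j, w j) ^ (q - 1) * ∑' j, w j * a (k + j) ^ q := ENNReal.tsum_le_tsum h1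
    _ = (∑' j, w j) ^ (q - 1) * ∑' j, w j * ∑' k, a (k + j) ^ q := by
      rw [ENNReal.tsum_mul_left, ENNReal.tsum_comm]
      simp_rw [ENNReal.tsum_mul_left]
    _ ≤ (∑' j, w j) ^ (q - 1) * ∑' j, w j * ∑' k, a k ^ q := by
      gcongr (∑' j, w j) ^ (q - 1) * ?_
      refine ENNReal.tsum_le_tsum fun j => ?_
      gcongr (w j) * ?_
      exact ENNReal.tsum_comp_le_tsum_of_injective (f := fun k => k + j)
        (add_left_injective j) (fun k => a k ^ q)
    _ = _ := by
      rw [ENNReal.tsum_mul_right, ← mul_assoc]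
      congr 1
      conv_rhs => rw [show q = (q - 1) + 1 by ring]
      rw [ENNReal.rpow_add_of_nonneg _ _ (by linarith) (by norm_num), ENNReal.rpow_one]

lemma eLp_pow (f : Rn n → ℝ) (p : ℝ≥0∞) (h0 : p ≠ 0) (ht : p ≠ ∞) :
    eLpNorm f p volume ^ p.toReal = ∫⁻ x, ‖f x‖ₑ ^ p.toReal := by
  have : 0 < p.toReal := ENNReal.toReal_pos h0 ht
  rw [eLpNorm_eq_lintegral_rpow_enorm_toReal h0 ht, ← ENNReal.rpow_mul,
    one_div_mul_cancel this.ne', ENNReal.rpow_one]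

lemma fin_eLp (f : SchwartzMap (Rn n) ℝ) (p : ℝ≥0∞) : eLpNorm f p volume ≠ ∞ :=
  (f.memLp p volume).2.ne

lemma le_of_pow_le {a b : ℝ≥0∞} {p : ℝ} (hp : 0 < p) (h : a ^ p ≤ b ^ p) : a ≤ b :=
  (ENNReal.rpow_le_rpow_iff hp).1 h

lemma enorm_sconv_le (φ f : SchwartzMap (Rn n) ℝ) (x : Rn n) :
    ‖sconv φ f x‖ₑ ≤ ∫⁻ t, ‖φ t‖ₑ * ‖f (x - t)‖ₑ := by
  rw [sconv_apply]
  refine (enorm_integral_le_lintegral_enorm _).trans ?_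
  simp [ContinuousLinearMap.mul_apply', enorm_mul]

lemma young (φ f : SchwartzMap (Rn n) ℝ) (p : ℝ≥0∞) (h1 : 1 ≤ p) (ht : p ≠ ∞) :
    eLpNorm (sconv φ f) p volume ≤ eLpNorm φ 1 volume * eLpNorm f p volume := by
  have h0 : p ≠ 0 := by positivity
  have hp : 0 < p.toReal := ENNReal.toReal_pos h0 ht
  have hp1 : 1 ≤ p.toReal := by
    have := ENNReal.toReal_mono ht h1
    simpa using this
  have mφ : Measurable (fun t => ‖φ t‖ₑ) := φ.continuous.measurable.enorm
  have mf : Measurable (fun t => ‖f t‖ₑ) := f.continuous.measurable.enorm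
  apply le_of_pow_le hp
  rw [ENNReal.mul_rpow_of_nonneg _ _ hp.le, eLp_pow _ _ h0 ht, eLp_pow _ _ h0 ht]
  let μ : Measure (Rn n) := volume.withDensity (fun t => ‖φ t‖ₑ)
  have hi : ∀ g : Rn n → ℝ≥0∞, Measurable g → ∫⁻ j, g j ∂μ = ∫⁻ t, ‖φ t‖ₑ * g t := by
    intro g hg
    rw [lintegral_withDensity_eq_lintegral_mul _ mφ hg]
    rfl
  have hu : μ Set.univ = eLpNorm φ 1 volume := by
    rw [← lintegral_one, hi _ (by fun_prop), eLpNorm_one_eq_lintegral_enorm]; simp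
  have hx : ∀ x, ‖sconv φ f x‖ₑ ^ p.toReal ≤
      eLpNorm φ 1 volume ^ (p.toReal - 1) * ∫⁻ t, ‖φ t‖ₑ * ‖f (x - t)‖ₑ ^ p.toReal := by
    intro x
    have mg : Measurable (fun t => ‖f (x - t)‖ₑ) := mf.comp (by fun_prop)
    have := jensen_aux μ (fun t => ‖f (x - t)‖ₑ) mg.aemeasurable p.toReal hp1
    rw [hi _ mg, hi _ (mg.pow_const _), hu] at this
    exact (ENNReal.rpow_le_rpow (enorm_sconv_le φ f x) hp.le).trans this
  calc _ ≤ ∫⁻ x, eLpNorm φ 1 volume ^ (p.toReal - 1) * ∫⁻ t, ‖φ t‖ₑ * ‖f (x - t)‖ₑ ^ p.toReal :=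
        lintegral_mono hx
    _ = eLpNorm φ 1 volume ^ (p.toReal - 1) *
        ∫⁻ x, ∫⁻ t, ‖φ t‖ₑ * ‖f (x - t)‖ₑ ^ p.toReal := by
        rw [lintegral_const_mul']
        exact ENNReal.rpow_ne_top_of_nonneg (by linarith) (fin_eLp φ 1)
    _ = eLpNorm φ 1 volume ^ (p.toReal - 1) *
        ∫⁻ t, ∫⁻ x, ‖φ t‖ₑ * ‖f (x - t)‖ₑ ^ p.toReal := by
        rw [lintegral_lintegral_swap]
        apply Measurable.aemeasurable
        have : Measurable (fun z : Rn n × Rn n => ‖f (z.1 - z.2)‖ₑ) :=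
          mf.comp (measurable_fst.sub measurable_snd)
        exact (mφ.comp measurable_snd).mul (this.pow_const _)
    _ = eLpNorm φ 1 volume ^ (p.toReal - 1) *
        ∫⁻ t, ‖φ t‖ₑ * ∫⁻ x, ‖f x‖ₑ ^ p.toReal := by
        congr 2
        ext t
        rw [lintegral_const_mul' _ _ enorm_ne_top,
          lintegral_sub_right_eq_self (fun x => ‖f x‖ₑ ^ p.toReal) t]
    _ = _ := by
        rw [lintegral_mul_const _ mφ, ← eLpNorm_one_eq_lintegral_enorm, ← mul_assoc]
        congr 1
        conv_rhs => rw [show p.toReal = (p.toReal - 1) + 1 by ring]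
        rw [ENNReal.rpow_add_of_nonneg _ _ (by linarith) (by norm_num), ENNReal.rpow_one]

lemma lintegral_scale (g : Rn n → ℝ≥0∞) (hg : Measurable g) (j : ℤ) :
    ∫⁻ x, g ((2:ℝ)^j • x) = ENNReal.ofReal (2 ^ (-(j * n : ℝ))) * ∫⁻ x, g x := by
  have h2 : (2:ℝ)^j ≠ 0 := by positivity
  have := Measure.map_addHaar_smul (volume : Measure (Rn n)) h2
  rw [← lintegral_map (f := g) (g := fun x : Rn n => (2:ℝ)^j • x) hg (by fun_prop), this,
    lintegral_smul_measure, smul_eq_mul]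
  congr 2
  rw [finrank_euclideanSpace_fin, abs_of_pos (by positivity), Real.rpow_neg (by norm_num),
    Real.rpow_mul (by norm_num), Real.rpow_intCast, Real.rpow_natCast]

lemma eLp_dil (φ : SchwartzMap (Rn n) ℝ) (j : ℤ) (p : ℝ≥0∞) (h0 : p ≠ 0) (ht : p ≠ ∞) :
    eLpNorm (dil φ j) p volume =
      ENNReal.ofReal (2 ^ ((j:ℝ) * (n * (1 - 1 / p.toReal)))) * eLpNorm φ p volume := by
  have hp : 0 < p.toReal := ENNReal.toReal_pos h0 ht
  have mφ : Measurable (fun t => ‖φ t‖ₑ) := φ.continuous.measurable.enorm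
  have key : eLpNorm (dil φ j) p volume ^ p.toReal =
      (ENNReal.ofReal (2 ^ ((j:ℝ) * (n * (1 - 1 / p.toReal)))) * eLpNorm φ p volume) ^ p.toReal := by
    rw [ENNReal.mul_rpow_of_nonneg _ _ hp.le, eLp_pow _ _ h0 ht, eLp_pow _ _ h0 ht]
    have e : ∀ x, ‖dil φ j x‖ₑ ^ p.toReal =
       ENNReal.ofReal (2 ^ ((j:ℝ) * n * p.toReal)) * (fun y => ‖φ y‖ₑ ^ p.toReal) ((2:ℝ)^j • x) := by
      intro x
      rw [dil_apply, lpKernel, enorm_mul, ENNReal.mul_rpow_of_nonneg _ _ hp.le,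
        Real.enorm_of_nonneg (by positivity), ENNReal.ofReal_rpow_of_nonneg (by positivity) hp.le]
      congr 2
      rw [Real.rpow_mul (by norm_num)]
      congr 1
      rw [← Real.rpow_intCast]; push_cast; rfl
    simp_rw [e]
    rw [lintegral_const_mul' _ _ ENNReal.ofReal_ne_top, lintegral_scale _ (mφ.pow_const _),
      ← mul_assoc, ← ENNReal.ofReal_mul (by positivity),
      ENNReal.ofReal_rpow_of_nonneg (by positivity) hp.le, ← Real.rpow_mul (by norm_num),
      ← Real.rpow_add (by norm_num)]
    congr 3
    field_simp
    try ring
  exact le_antisymm (le_of_pow_le hp key.le) (le_of_pow_le hp key.ge)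

lemma eLp_dil_one (φ : SchwartzMap (Rn n) ℝ) (j : ℤ) :
    eLpNorm (dil φ j) 1 volume = eLpNorm φ 1 volume := by
  rw [eLp_dil φ j 1 (by norm_num) (by norm_num)]; simp

lemma holder_pt (φ f : SchwartzMap (Rn n) ℝ) (p q : ℝ≥0∞) [ENNReal.HolderTriple q p 1] (x : Rn n) :
    ‖sconv φ f x‖ₑ ≤ eLpNorm φ q volume * eLpNorm f p volume := by
  refine (enorm_sconv_le φ f x).trans ?_
  have h := eLpNorm_smul_le_mul_eLpNorm (p := q) (q := p) (r := 1) (μ := volume)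
    (f := fun t => f (x - t)) (φ := φ)
    (f.continuous.comp (by fun_prop)).aestronglyMeasurable φ.continuous.aestronglyMeasurable
  rw [eLpNorm_one_eq_lintegral_enorm] at h
  have e : eLpNorm (fun t => f (x - t)) p volume = eLpNorm f p volume := by
    have := eLpNorm_comp_measurePreserving (p := p) (f := fun t : Rn n => x - t) (g := f)
      (μ := volume) (ν := volume)
      f.continuous.aestronglyMeasurable (Measure.measurePreserving_sub_left volume x)
    exact this
  rw [e] at h
  refine le_trans (le_of_eq ?_) h
  simp [enorm_mul]

lemma bernstein_ineq (Ψ : SchwartzMap (Rn n) ℝ) (p r : ℝ≥0∞) (hp : 1 < p) (hpr : p ≤ r) (hr : r ≠ ∞) :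
    ∃ C : ℝ≥0∞, C ≠ ∞ ∧ ∀ (m : ℤ) (f : SchwartzMap (Rn n) ℝ), sconv (dil Ψ m) f = f →
      eLpNorm f r volume ≤ C * ENNReal.ofReal (2 ^ ((m:ℝ) * (n * (1 / p.toReal - 1 / r.toReal)))) *
        eLpNorm f p volume := by
  have hpt : p ≠ ∞ := (hpr.trans_lt hr.lt_top).ne
  have hp0 : p ≠ 0 := by rintro rfl; simp at hp
  have hr0 : r ≠ 0 := by rintro rfl; simp at hpr; exact hp0 hpr
  have hp1 : 1 < p.toReal := by
    have := (ENNReal.toReal_lt_toReal (by simp) hpt).2 hp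
    simpa using this
  have hpr' : p.toReal ≤ r.toReal := ENNReal.toReal_mono hr hpr
  let q := ENNReal.conjExponent p
  have : ENNReal.HolderConjugate p q := ENNReal.HolderConjugate.conjExponent hp.le
  have : ENNReal.HolderTriple q p 1 := ENNReal.HolderTriple.symm
  have hc : p.toReal.HolderConjugate q.toReal := ENNReal.HolderConjugate.toReal hp1
  have hqr : q.toReal⁻¹ = 1 - p.toReal⁻¹ := by
    have := hc.inv_add_inv_eq_one
    linarith
  have hqpos : 0 < q.toReal := hc.symm.pos
  have hqt : q ≠ ∞ := (ENNReal.toReal_pos_iff.1 hqpos).2.ne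
  have hq0 : q ≠ 0 := (ENNReal.toReal_pos_iff.1 hqpos).1.ne'
  set a := p.toReal
  set ρ := r.toReal
  have ha : 0 < a := by linarith
  have hρ : 0 < ρ := by linarith
  refine ⟨eLpNorm Ψ q volume ^ ((ρ - a) / ρ), ENNReal.rpow_ne_top_of_nonneg
    (div_nonneg (by linarith) hρ.le) (fin_eLp Ψ q), ?_⟩
  intro m f hf
  have hb : ∀ x, ‖f x‖ₑ ≤ ENNReal.ofReal (2 ^ ((m:ℝ) * (n / a))) *
      eLpNorm Ψ q volume * eLpNorm f p volume := by
    intro x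
    have := holder_pt (dil Ψ m) f p q x
    rw [hf, eLp_dil _ _ _ hq0 hqt, one_div, hqr] at this
    convert this using 6
    ring
  set K := eLpNorm Ψ q volume
  set N := eLpNorm f p volume with hN
  set T := ENNReal.ofReal (2 ^ ((m:ℝ) * (n / a)))
  apply le_of_pow_le hρ
  rw [eLp_pow _ _ hr0 hr]
  calc ∫⁻ x, ‖f x‖ₑ ^ ρ ≤ ∫⁻ x, (T * K * N) ^ (ρ - a) * ‖f x‖ₑ ^ a := by
        apply lintegral_mono
        intro x
        calc ‖f x‖ₑ ^ ρ = ‖f x‖ₑ ^ (ρ - a) * ‖f x‖ₑ ^ a := by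
              rw [← ENNReal.rpow_add_of_nonneg _ _ (by linarith) ha.le]; ring_nf
          _ ≤ _ := by exact mul_le_mul' (ENNReal.rpow_le_rpow (hb x) (by linarith)) le_rfl
    _ = (T * K * N) ^ (ρ - a) * N ^ a := by
        rw [lintegral_const_mul _ (f.continuous.measurable.enorm.pow_const _), hN, eLp_pow _ _ hp0 hpt]
    _ = _ := by
        rw [ENNReal.mul_rpow_of_nonneg _ _ (by linarith), ENNReal.mul_rpow_of_nonneg _ _ (by linarith),
          ENNReal.mul_rpow_of_nonneg _ _ hρ.le, ENNReal.mul_rpow_of_nonneg _ _ hρ.le,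
          ← ENNReal.rpow_mul, div_mul_cancel₀ _ hρ.ne', mul_assoc _ (N ^ _),
          ← ENNReal.rpow_add_of_nonneg _ _ (by linarith) ha.le, sub_add_cancel,
          mul_comm (K ^ _)]
        congr 2
        rw [ENNReal.ofReal_rpow_of_nonneg (by positivity) (by linarith),
          ENNReal.ofReal_rpow_of_nonneg (by positivity) (by linarith),
          ← Real.rpow_mul (by norm_num), ← Real.rpow_mul (by norm_num)]
        congr 2
        field_simp

lemma conv_tendsto {Ψ : SchwartzMap (Rn n) ℝ} (hI : ∫ x, Ψ x = 1) (u : SchwartzMap (Rn n) ℝ)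
    (x : Rn n) : Tendsto (fun N : ℕ => sconv (dil Ψ N) u x) atTop (nhds (u x)) := by
  have e : ∀ N : ℕ, sconv (dil Ψ N) u x = ∫ t, Ψ t * u (x - (2:ℝ)^(-(N:ℤ)) • t) := by
    intro N
    rw [sconv_apply]
    have := Measure.integral_comp_smul (volume : Measure (Rn n))
      (fun t => Ψ t * u (x - (2:ℝ)^(-(N:ℤ)) • t)) ((2:ℝ)^(N:ℤ))
    simp only [MeasureTheory.convolution, ContinuousLinearMap.mul_apply', dil_apply, lpKernel]
    simp only [smul_smul, ← zpow_add₀ (two_ne_zero (α := ℝ)), neg_add_cancel, zpow_zero, one_smul]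
      at this
    simp_rw [mul_assoc]
    rw [integral_const_mul, this, smul_eq_mul, ← mul_assoc]
    have : (2:ℝ) ^ ((N:ℤ) * (n:ℤ)) * |((2 ^ (N:ℤ) : ℝ) ^ Module.finrank ℝ (Rn n))⁻¹| = 1 := by
      rw [abs_of_pos (by positivity), finrank_euclideanSpace_fin, zpow_mul, zpow_natCast]
      field_simp
    rw [this, one_mul]
  simp_rw [e]
  have : u x = ∫ t, Ψ t * u x := by rw [integral_mul_const, hI, one_mul]
  rw [this]
  obtain ⟨M, hM⟩ : ∃ M, ∀ y, ‖u y‖ ≤ M := ⟨_, fun y => u.toBoundedContinuousFunction.norm_coe_le_norm y⟩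
  apply tendsto_integral_of_dominated_convergence (fun t => ‖Ψ t‖ * M)
  · intro N
    have := u.continuous
    have := Ψ.continuous
    exact (by fun_prop : Continuous _).aestronglyMeasurable
  · exact Ψ.integrable.norm.mul_const M
  · intro N
    refine .of_forall fun t => ?_
    rw [norm_mul]
    gcongr
    exact hM _
  · refine .of_forall fun t => ?_
    apply Tendsto.const_mul
    have h1 : Tendsto (fun N : ℕ => x - (2:ℝ)^(-(N:ℤ)) • t) atTop (nhds (x - (0:ℝ) • t)) := by
      apply Tendsto.const_sub
      apply Tendsto.smul_const
      have := tendsto_pow_atTop_nhds_zero_of_lt_one (r := (2:ℝ)⁻¹) (by norm_num) (by norm_num)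
      simpa using this
    have := (u.continuous.tendsto _).comp h1
    simpa using! this

lemma tail_bound {ψ₀ Ψ : SchwartzMap (Rn n) ℝ} (hψ : IsLPF n ψ₀) (hΨ : IsLowPiece ψ₀ Ψ)
    (u : SchwartzMap (Rn n) ℝ) (p : ℝ≥0∞) (hp : 1 ≤ p) (m : ℕ) :
    eLpNorm (u - sconv (dil Ψ m) u) p volume ≤
      ∑' j : ℕ, eLpNorm (sconv (dil ψ₀ ((m + j : ℕ) : ℤ)) u) p volume := by
  have h1 : ∀ N : ℕ, eLpNorm (sconv (dil Ψ ((m + N : ℕ):ℤ)) u - sconv (dil Ψ m) u) p volume ≤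
      ∑ j ∈ Finset.range N, eLpNorm (sconv (dil ψ₀ ((m + j : ℕ) : ℤ)) u) p volume := by
    intro N
    induction N with
    | zero => simp
    | succ N ih =>
      rw [Finset.sum_range_succ]
      have e : ((m + (N + 1) : ℕ) : ℤ) = ((m + N : ℕ) : ℤ) + 1 := by push_cast; ring
      rw [e, Psi_succ hψ hΨ]
      have e2 : (⇑(sconv (dil Ψ ((m + N : ℕ):ℤ)) u + sconv (dil ψ₀ ((m + N : ℕ):ℤ)) u - sconv (dil Ψ m) u))
        = ⇑(sconv (dil Ψ ((m + N : ℕ):ℤ)) u - sconv (dil Ψ m) u) + ⇑(sconv (dil ψ₀ ((m + N : ℕ):ℤ)) u) := by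
        ext x; simp; ring
      rw [e2]
      refine (eLpNorm_add_le ?_ ?_ hp).trans (by gcongr)
      · exact (SchwartzMap.continuous _).aestronglyMeasurable
      · exact (SchwartzMap.continuous _).aestronglyMeasurable
  have h2 := Lp.eLpNorm_lim_le_liminf_eLpNorm (p := p) (μ := volume)
    (f := fun N : ℕ => ⇑(sconv (dil Ψ ((m + N : ℕ):ℤ)) u - sconv (dil Ψ m) u))
    (fun N => (SchwartzMap.continuous _).aestronglyMeasurable)
    ⇑(u - sconv (dil Ψ m) u) (.of_forall fun x => by
      have := (conv_tendsto (integral_Psi hψ hΨ) u x).comp (tendsto_add_atTop_nat m)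
      have := this.sub_const (sconv (dil Ψ m) u x)
      simpa [Function.comp_def, add_comm] using! this)
  refine h2.trans ?_
  refine liminf_le_of_le (by isBoundedDefault) ?_
  intro b hb
  obtain ⟨N, hN⟩ := hb.exists
  exact hN.trans ((h1 N).trans (ENNReal.sum_le_tsum _))

def lqn (q : ℝ≥0∞) (e : ℕ → ℝ≥0∞) : ℝ≥0∞ :=
  if q = ∞ then ⨆ j, e j else (∑' j, e j ^ q.toReal) ^ (1 / q.toReal)

lemma lqn_ge (q : ℝ≥0∞) (hq : 1 ≤ q) (e : ℕ → ℝ≥0∞) (j : ℕ) : e j ≤ lqn q e := by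
  unfold lqn
  split_ifs with h
  · exact le_iSup e j
  · have h1 : 1 ≤ q.toReal := by simpa using ENNReal.toReal_mono h hq
    have h0 : 0 < q.toReal := by linarith
    apply le_of_pow_le h0
    rw [← ENNReal.rpow_mul, one_div_mul_cancel h0.ne', ENNReal.rpow_one]
    exact ENNReal.le_tsum j

lemma lqn_combine (q : ℝ≥0∞) (hq : 1 ≤ q) (e a w : ℕ → ℝ≥0∞) (M D : ℝ≥0∞)
    (h0 : e 0 ≤ M) (h1 : e 1 ≤ M) (h2 : ∀ k, e (k + 2) ≤ D * ∑' j, w j * a (k + j)) :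
    lqn q e ≤ M + M + D * ((∑' j, w j) * lqn q a) := by
  by_cases h : q = ∞
  · have hE : lqn q e = ⨆ j, e j := by simp [lqn, h]
    rw [hE]
    apply iSup_le
    intro j
    match j with
    | 0 => exact h0.trans (le_add_right le_self_add)
    | 1 => exact h1.trans (le_add_right le_self_add)
    | k + 2 =>
      refine (h2 k).trans (le_trans ?_ le_add_self)
      gcongr
      rw [← ENNReal.tsum_mul_right]
      exact ENNReal.tsum_le_tsum fun j => mul_le_mul' le_rfl (lqn_ge q hq a _)
  · have hq1 : 1 ≤ q.toReal := by simpa using ENNReal.toReal_mono h hq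
    have hq0 : 0 < q.toReal := by linarith
    simp only [lqn, h, if_false]
    set t := q.toReal
    have ht1 : 1 / t ≤ 1 := by rw [div_le_one hq0]; exact hq1
    have ht0 : 0 ≤ 1 / t := by positivity
    have key : ∑' j, e j ^ t ≤ M ^ t + M ^ t + D ^ t * ((∑' j, w j) ^ t * ∑' j, a j ^ t) := by
      have hs : ∑' j, e j ^ t = e 0 ^ t + (e 1 ^ t + ∑' k, e (k + 2) ^ t) := by
        rw [tsum_eq_zero_add' ENNReal.summable, tsum_eq_zero_add' ENNReal.summable]
      rw [hs, add_assoc]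
      refine add_le_add (ENNReal.rpow_le_rpow h0 hq0.le) (add_le_add (ENNReal.rpow_le_rpow h1 hq0.le) ?_)
      calc ∑' k, e (k + 2) ^ t ≤ ∑' k, D ^ t * (∑' j, w j * a (k + j)) ^ t := by
            refine ENNReal.tsum_le_tsum fun k => ?_
            rw [← ENNReal.mul_rpow_of_nonneg _ _ hq0.le]
            exact ENNReal.rpow_le_rpow (h2 k) hq0.le
        _ ≤ _ := by
            rw [ENNReal.tsum_mul_left]
            gcongr
            exact seq_aux w a t hq1
    have c : ∀ x : ℝ≥0∞, (x ^ t) ^ (1 / t) = x := fun x => by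
      rw [← ENNReal.rpow_mul, mul_one_div_cancel hq0.ne', ENNReal.rpow_one]
    calc _ ≤ (M ^ t + M ^ t + D ^ t * ((∑' j, w j) ^ t * ∑' j, a j ^ t)) ^ (1 / t) :=
          ENNReal.rpow_le_rpow key ht0
      _ ≤ (M ^ t + M ^ t) ^ (1/t) + (D ^ t * ((∑' j, w j) ^ t * ∑' j, a j ^ t)) ^ (1 / t) :=
          ENNReal.rpow_add_le_add_rpow _ _ ht0 ht1
      _ ≤ (M ^ t) ^ (1/t) + (M ^ t) ^ (1/t) + (D ^ t * ((∑' j, w j) ^ t * ∑' j, a j ^ t)) ^ (1 / t) := by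
          gcongr
          exact ENNReal.rpow_add_le_add_rpow _ _ ht0 ht1
      _ = _ := by
          rw [ENNReal.mul_rpow_of_nonneg _ _ ht0, ENNReal.mul_rpow_of_nonneg _ _ ht0, c, c, c]

lemma geo_ne_top (t : ℝ) (ht : 0 < t) : ∑' j : ℕ, ENNReal.ofReal (2 ^ (-((j:ℝ) * t))) ≠ ∞ := by
  have e : ∀ j : ℕ, ENNReal.ofReal ((2:ℝ) ^ (-((j:ℝ) * t))) = (ENNReal.ofReal (2 ^ (-t))) ^ j := by
    intro j
    rw [← ENNReal.ofReal_pow (by positivity), ← Real.rpow_natCast, ← Real.rpow_mul (by norm_num)]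
    congr 2; ring
  simp_rw [e, ENNReal.tsum_geometric]
  have : ENNReal.ofReal ((2:ℝ) ^ (-t)) < 1 := by
    rw [← ENNReal.ofReal_one, ENNReal.ofReal_lt_ofReal_iff one_pos]
    exact Real.rpow_lt_one_of_one_lt_of_neg (by norm_num) (by linarith)
  exact ENNReal.inv_ne_top.2 (tsub_pos_of_lt this).ne'

lemma two_mul_pow (x y : ℝ) : ENNReal.ofReal ((2:ℝ) ^ x) * ENNReal.ofReal ((2:ℝ) ^ y) =
    ENNReal.ofReal ((2:ℝ) ^ (x + y)) := by
  rw [← ENNReal.ofReal_mul (by positivity), ← Real.rpow_add (by norm_num)]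

lemma besov_eq (ψ₀ Ψ u : SchwartzMap (Rn n) ℝ) (s : ℝ) (p q : ℝ≥0∞) :
    besovNorm ψ₀ Ψ s p q (fun x => u x) = eLpNorm (sconv Ψ u) p volume +
      lqn q (fun j => ENNReal.ofReal ((2:ℝ) ^ ((j:ℝ) * s)) * eLpNorm (sconv (dil ψ₀ (j:ℤ)) u) p volume) := by
  have h : ∀ j : ℕ, lpProj ψ₀ (j:ℤ) (fun x => u x) = ⇑(sconv (dil ψ₀ j) u) := fun j => lpProj_eq _ _ _
  simp only [besovNorm, lqn, h, sconv_coe Ψ u]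

lemma holderS (f g : SchwartzMap (Rn n) ℝ) (p₁ r p : ℝ≥0∞) [ENNReal.HolderTriple p₁ r p] :
    eLpNorm (smulS f g) p volume ≤ eLpNorm f p₁ volume * eLpNorm g r volume :=
  eLpNorm_smul_le_mul_eLpNorm (p := p₁) (q := r) (r := p) (μ := volume) (f := g) (φ := f)
    g.continuous.aestronglyMeasurable f.continuous.aestronglyMeasurable

lemma norm_dec {ψ₀ Ψ : SchwartzMap (Rn n) ℝ} (hψ : IsLPF n ψ₀) (hΨ : IsLowPiece ψ₀ Ψ)
    (u : SchwartzMap (Rn n) ℝ) (p : ℝ≥0∞) (hp : 1 ≤ p) :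
    eLpNorm u p volume ≤ eLpNorm (sconv Ψ u) p volume +
      ∑' j : ℕ, eLpNorm (sconv (dil ψ₀ (j : ℤ)) u) p volume := by
  have h := tail_bound hψ hΨ u p hp 0
  simp only [Nat.cast_zero, dil_zero, zero_add] at h
  have e : (u : Rn n → ℝ) = ⇑(sconv Ψ u) + ⇑(u - sconv Ψ u) := by ext x; simp
  calc eLpNorm u p volume = eLpNorm (⇑(sconv Ψ u) + ⇑(u - sconv Ψ u)) p volume := by rw [← e]
    _ ≤ _ := (eLpNorm_add_le (SchwartzMap.continuous _).aestronglyMeasurable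
        (SchwartzMap.continuous _).aestronglyMeasurable hp).trans (by gcongr)

/-- linear embedding bounds -/
lemma embed1 {ψ₀ Ψ : SchwartzMap (Rn n) ℝ} (hψ : IsLPF n ψ₀) (hΨ : IsLowPiece ψ₀ Ψ)
    (s : ℝ) (hs : 0 < s) (p q : ℝ≥0∞) (hp : 1 ≤ p) (hq : 1 ≤ q) :
    ∃ C : ℝ≥0∞, C ≠ ∞ ∧ ∀ u : SchwartzMap (Rn n) ℝ,
      eLpNorm u p volume ≤ C * besovNorm ψ₀ Ψ s p q (fun x => u x) := by
  refine ⟨1 + ∑' j : ℕ, ENNReal.ofReal (2 ^ (-((j:ℝ) * s))), by simpa using geo_ne_top s hs, fun u => ?_⟩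
  rw [besov_eq]
  set a := fun j : ℕ => ENNReal.ofReal ((2:ℝ) ^ ((j:ℝ) * s)) * eLpNorm (sconv (dil ψ₀ (j:ℤ)) u) p volume
  refine (norm_dec hψ hΨ u p hp).trans ?_
  rw [add_mul, one_mul, ← ENNReal.tsum_mul_right]
  refine add_le_add le_self_add (ENNReal.tsum_le_tsum fun j => ?_)
  have : eLpNorm (sconv (dil ψ₀ (j : ℤ)) u) p volume = ENNReal.ofReal (2 ^ (-((j:ℝ) * s))) * a j := by
    simp only [a]
    rw [← mul_assoc, two_mul_pow]; simp
  rw [this]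
  gcongr
  exact (lqn_ge q hq a j).trans le_add_self

lemma embed2 {ψ₀ Ψ : SchwartzMap (Rn n) ℝ} (hψ : IsLPF n ψ₀) (hΨ : IsLowPiece ψ₀ Ψ)
    (s : ℝ) (p r q : ℝ≥0∞) (hp : 1 < p) (hpr : p ≤ r) (hr : r ≠ ∞) (hq : 1 ≤ q)
    (hs : (n:ℝ) * (1 / p.toReal - 1 / r.toReal) < s) :
    ∃ C : ℝ≥0∞, C ≠ ∞ ∧ ∀ u : SchwartzMap (Rn n) ℝ,
      eLpNorm u r volume ≤ C * besovNorm ψ₀ Ψ s p q (fun x => u x) := by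
  obtain ⟨K, hK, hB⟩ := bernstein_ineq Ψ p r hp hpr hr
  set δ := (n:ℝ) * (1 / p.toReal - 1 / r.toReal)
  clear_value δ
  set T := ENNReal.ofReal ((2:ℝ) ^ (2 * δ))
  refine ⟨K * T * (1 + ∑' j : ℕ, ENNReal.ofReal (2 ^ (-((j:ℝ) * (s - δ))))),
    ENNReal.mul_ne_top (ENNReal.mul_ne_top hK ENNReal.ofReal_ne_top)
      (by simpa using geo_ne_top (s - δ) (by linarith)), fun u => ?_⟩
  rw [besov_eq]
  set a := fun j : ℕ => ENNReal.ofReal ((2:ℝ) ^ ((j:ℝ) * s)) * eLpNorm (sconv (dil ψ₀ (j:ℤ)) u) p volume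
  refine (norm_dec hψ hΨ u r (hp.le.trans hpr)).trans ?_
  rw [mul_add (K * T), mul_one, add_mul, ← ENNReal.tsum_mul_left, ← ENNReal.tsum_mul_right]
  refine add_le_add ?_ (ENNReal.tsum_le_tsum fun j => ?_)
  · have h := hB 2 (sconv Ψ u) (by
      have := reproduce hψ hΨ Ψ (fun ξ h => ft_Psi_zero hψ hΨ ξ (by linarith)) 0 u
      simpa [dil_zero] using this)
    refine h.trans ?_
    have : ((2:ℤ):ℝ) * δ = 2 * δ := by norm_num
    rw [this]
    gcongr
    exact le_self_add
  · have h := hB ((j:ℤ) + 2) (sconv (dil ψ₀ j) u)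
      (reproduce hψ hΨ ψ₀ (fun ξ h => ft_psi_zero hψ ξ (Or.inr h)) j u)
    refine h.trans ?_
    have e : ENNReal.ofReal ((2:ℝ) ^ ((((j:ℤ) + 2 : ℤ) : ℝ) * δ)) * eLpNorm (sconv (dil ψ₀ (j : ℤ)) u) p volume
       = T * ENNReal.ofReal (2 ^ (-((j:ℝ) * (s - δ)))) * a j := by
      simp only [a, T]
      rw [← mul_assoc, two_mul_pow, two_mul_pow]
      congr 3
      push_cast; ring
    rw [mul_assoc, e, ← mul_assoc K, ← mul_assoc K]
    refine mul_le_mul' le_rfl ?_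
    exact (lqn_ge q hq a j).trans le_add_self

lemma high_bound {ψ₀ Ψ : SchwartzMap (Rn n) ℝ} (hψ : IsLPF n ψ₀) (hΨ : IsLowPiece ψ₀ Ψ)
    (p p₁ r : ℝ≥0∞) [ENNReal.HolderTriple p₁ r p] (hp : 1 ≤ p) (hpt : p ≠ ∞) (hp₁ : 1 ≤ p₁)
    (hr : 1 ≤ r) (hrt : r ≠ ∞) (k : ℕ) (u : SchwartzMap (Rn n) ℝ) :
    eLpNorm (sconv (dil ψ₀ ((k + 2 : ℕ) : ℤ)) (smulS u u)) p volume ≤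
      eLpNorm ψ₀ 1 volume * (1 + eLpNorm Ψ 1 volume) * eLpNorm u r volume *
        ∑' j : ℕ, eLpNorm (sconv (dil ψ₀ ((k + j : ℕ) : ℤ)) u) p₁ volume := by
  set S := sconv (dil Ψ k) u with hS
  have e : smulS u u = smulS S S + smulS (u - S) (u + S) := by
    ext x
    simp only [smulS_apply, add_apply, sub_apply]
    ring
  have add_r : ∀ f g h : SchwartzMap (Rn n) ℝ, sconv f (g + h) = sconv f g + sconv f h := by
    intro f g h
    apply ftC_inj
    intro ξ
    simp only [ftC_sconv, ftC_add, mul_add]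
  have e2 : sconv (dil ψ₀ ((k + 2 : ℕ) : ℤ)) (smulS u u) =
      sconv (dil ψ₀ ((k + 2 : ℕ) : ℤ)) (smulS (u - S) (u + S)) := by
    rw [e, add_r]
    have := square_low hψ hΨ (k:ℤ) u
    push_cast
    rw [this, zero_add]
  rw [e2]
  have hy := young (dil Ψ k) u r hr hrt
  rw [eLp_dil_one] at hy
  have hsum : eLpNorm (⇑(u + S)) r volume ≤ (1 + eLpNorm Ψ 1 volume) * eLpNorm u r volume := by
    have := eLpNorm_add_le (p := r) (μ := volume) u.continuous.aestronglyMeasurable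
      S.continuous.aestronglyMeasurable hr
    rw [add_mul, one_mul]
    exact this.trans (by gcongr)
  calc _ ≤ eLpNorm ψ₀ 1 volume * eLpNorm (smulS (u - S) (u + S)) p volume := by
        have := young (dil ψ₀ ((k + 2 : ℕ) : ℤ)) (smulS (u - S) (u + S)) p hp hpt
        rwa [eLp_dil_one] at this
    _ ≤ eLpNorm ψ₀ 1 volume * (eLpNorm (⇑(u - S)) p₁ volume * eLpNorm (⇑(u + S)) r volume) := by
        gcongr
        exact holderS _ _ p₁ r p
    _ ≤ eLpNorm ψ₀ 1 volume * ((∑' j : ℕ, eLpNorm (sconv (dil ψ₀ ((k + j : ℕ) : ℤ)) u) p₁ volume) *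
          ((1 + eLpNorm Ψ 1 volume) * eLpNorm u r volume)) := by
        gcongr
        exact tail_bound hψ hΨ u p₁ hp₁ k
    _ = _ := by ring

/-- Besov product estimate for squares: if `s > 0`, `q ∈ [1,∞]`,
`p, p₁ ∈ [1,∞)` with `p < p₁ ≤ 2p` and `s > n(2/p₁ − 1/p)`, then
`‖u²‖_{B^s_{p,q}} ≤ C ‖u‖²_{B^s_{p₁,q}}` for all Schwartz `u`. -/
theorem besov_square_estimate
    (n : ℕ) (hn : 1 ≤ n) (ψ₀ Ψ : SchwartzMap (Rn n) ℝ)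
    (hψ : IsLPF n ψ₀) (hΨ : IsLowPiece ψ₀ Ψ)
    (s : ℝ) (hs : 0 < s) (q : ℝ≥0∞) (hq : 1 ≤ q)
    (p p₁ : ℝ≥0∞) (hp1 : 1 ≤ p) (hpp₁ : p < p₁) (hp₁2p : p₁ ≤ 2 * p) (hp₁fin : p₁ < ∞)
    (hsn : (n:ℝ) * (2 / p₁.toReal - 1 / p.toReal) < s) :
    ∃ C : ℝ, 0 < C ∧ ∀ u : SchwartzMap (Rn n) ℝ,
      besovNorm ψ₀ Ψ s p q (fun x => u x * u x)
        ≤ ENNReal.ofReal C * (besovNorm ψ₀ Ψ s p₁ q (fun x => u x)) ^ 2 := by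
  have hpt : p ≠ ∞ := (hpp₁.trans hp₁fin).ne
  have hp0 : p ≠ 0 := (zero_lt_one.trans_le hp1).ne'
  have hp₁1 : 1 < p₁ := hp1.trans_lt hpp₁
  have hp₁0 : p₁ ≠ 0 := (zero_lt_one.trans hp₁1).ne'
  have hlt : p₁⁻¹ < p⁻¹ := ENNReal.inv_lt_inv.2 hpp₁
  set r : ℝ≥0∞ := (p⁻¹ - p₁⁻¹)⁻¹ with hr
  have hri : r⁻¹ = p⁻¹ - p₁⁻¹ := by rw [hr, inv_inv]
  have hrt : r ≠ ∞ := ENNReal.inv_ne_top.2 (tsub_pos_of_lt hlt).ne'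
  have hsum : p₁⁻¹ + r⁻¹ = p⁻¹ := by rw [hri]; exact add_tsub_cancel_of_le hlt.le
  have hT : ENNReal.HolderTriple p₁ r p := ⟨hsum⟩
  have hpr : p₁ ≤ r := by
    rw [← ENNReal.inv_le_inv, hri]
    apply tsub_le_iff_right.2
    have h2 : p⁻¹ = 2 * (2 * p)⁻¹ := by
      rw [ENNReal.mul_inv (by simp) (by simp), ← mul_assoc, ENNReal.mul_inv_cancel (by simp) (by simp),
        one_mul]
    rw [h2, ← two_mul]
    gcongr
  have hr1 : 1 ≤ r := hp₁1.le.trans hpr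
  have hr0 : r ≠ 0 := (zero_lt_one.trans_le hr1).ne'
  have hreal : p₁.toReal⁻¹ + r.toReal⁻¹ = p.toReal⁻¹ := by
    rw [← ENNReal.toReal_inv, ← ENNReal.toReal_inv, ← ENNReal.toReal_inv, ← hsum,
      ENNReal.toReal_add (by simpa using hp₁0) (by simpa using hr0)]
  have hδ : (n:ℝ) * (1 / p₁.toReal - 1 / r.toReal) < s := by
    convert hsn using 2
    rw [one_div, one_div, one_div, ← hreal]
    ring
  obtain ⟨C1, hC1, hE1⟩ := embed1 hψ hΨ s hs p₁ q hp₁1.le hq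
  obtain ⟨C2, hC2, hE2⟩ := embed2 hψ hΨ s p₁ r q hp₁1 hpr hrt hq hδ
  set W := ∑' j : ℕ, ENNReal.ofReal ((2:ℝ) ^ (-((j:ℝ) * s))) with hW
  have hWt : W ≠ ∞ := geo_ne_top s hs
  set L := eLpNorm ψ₀ 1 volume with hL
  set Q := eLpNorm Ψ 1 volume with hQ
  have hLt : L ≠ ∞ := fin_eLp ψ₀ 1
  have hQt : Q ≠ ∞ := fin_eLp Ψ 1
  set t1 := ENNReal.ofReal ((2:ℝ) ^ (1 * s)) with ht1
  set t2 := ENNReal.ofReal ((2:ℝ) ^ (2 * s)) with ht2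
  set M := (1 + t1) * L * C1 * C2 with hM
  set D := t2 * L * (1 + Q) * C2 with hD
  set K := Q * C1 * C2 + (M + M + D * W) with hK
  have hKt : K ≠ ∞ := by
    have a1 : t1 ≠ ∞ := ENNReal.ofReal_ne_top
    have a2 : t2 ≠ ∞ := ENNReal.ofReal_ne_top
    clear_value t1 t2 L Q W
    simp only [hK, hM, hD]
    finiteness
  refine ⟨K.toReal + 1, by positivity, fun u => ?_⟩
  have hKle : K ≤ ENNReal.ofReal (K.toReal + 1) := by
    conv_lhs => rw [← ENNReal.ofReal_toReal hKt]
    exact ENNReal.ofReal_le_ofReal (by linarith)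
  refine le_trans ?_ (mul_le_mul' hKle le_rfl)
  have hu1 := hE1 u
  have hu2 := hE2 u
  set B := besovNorm ψ₀ Ψ s p₁ q (fun x => u x) with hB
  have hsq : eLpNorm (smulS u u) p volume ≤ C1 * C2 * B ^ 2 :=
    calc _ ≤ eLpNorm u p₁ volume * eLpNorm u r volume := holderS u u p₁ r p
      _ ≤ (C1 * B) * (C2 * B) := mul_le_mul' hu1 hu2
      _ = _ := by ring
  change besovNorm ψ₀ Ψ s p q (fun x => smulS u u x) ≤ _
  rw [besov_eq]
  set a : ℕ → ℝ≥0∞ :=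
    fun j : ℕ => ENNReal.ofReal ((2:ℝ) ^ ((j:ℝ) * s)) * eLpNorm (sconv (dil ψ₀ (j:ℤ)) u) p₁ volume with ha
  have haB : lqn q a ≤ B := by rw [hB, besov_eq]; exact le_add_self
  have hlow : eLpNorm (sconv Ψ (smulS u u)) p volume ≤ Q * C1 * C2 * B ^ 2 := by
    refine (young Ψ (smulS u u) p hp1 hpt).trans ?_
    calc Q * eLpNorm (smulS u u) p volume ≤ Q * (C1 * C2 * B ^ 2) := by gcongr
      _ = _ := by ring
  have hj : ∀ j : ℤ, eLpNorm (sconv (dil ψ₀ j) (smulS u u)) p volume ≤ L * (C1 * C2 * B ^ 2) := by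
    intro j
    have := young (dil ψ₀ j) (smulS u u) p hp1 hpt
    rw [eLp_dil_one] at this
    exact this.trans (by gcongr)
  have hcomb := lqn_combine q hq
    (fun j : ℕ => ENNReal.ofReal ((2:ℝ) ^ ((j:ℝ) * s)) *
      eLpNorm (sconv (dil ψ₀ (j:ℤ)) (smulS u u)) p volume) a
    (fun j : ℕ => ENNReal.ofReal ((2:ℝ) ^ (-((j:ℝ) * s)))) (M * B ^ 2) (D * B) ?_ ?_ ?_
  · refine (add_le_add hlow hcomb).trans ?_
    rw [← hW]
    calc _ ≤ Q * C1 * C2 * B ^ 2 + (M * B ^ 2 + M * B ^ 2 + D * B * (W * B)) := by gcongr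
      _ = K * B ^ 2 := by rw [hK]; ring
  · have e0 : ENNReal.ofReal ((2:ℝ) ^ (((0:ℕ):ℝ) * s)) = 1 := by simp
    simp only [e0]
    refine (mul_le_mul' le_rfl (hj _)).trans ?_
    calc 1 * (L * (C1 * C2 * B ^ 2)) ≤ (1 + t1) * (L * (C1 * C2 * B ^ 2)) := by
          gcongr; exact le_self_add
      _ = _ := by rw [hM]; ring
  · have e1 : ENNReal.ofReal ((2:ℝ) ^ (((1:ℕ):ℝ) * s)) = t1 := by simp [ht1]
    simp only [e1]
    refine (mul_le_mul' le_rfl (hj _)).trans ?_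
    calc t1 * (L * (C1 * C2 * B ^ 2)) ≤ (1 + t1) * (L * (C1 * C2 * B ^ 2)) := by
          gcongr; exact le_add_self
      _ = _ := by rw [hM]; ring
  · intro k
    have hh := high_bound hψ hΨ p p₁ r hp1 hpt hp₁1.le hr1 hrt k u
    have e2 : ENNReal.ofReal ((2:ℝ) ^ (((k + 2 : ℕ):ℝ) * s)) =
        t2 * ENNReal.ofReal ((2:ℝ) ^ ((k:ℝ) * s)) := by
      rw [ht2, two_mul_pow]
      congr 2
      push_cast; ring
    have e3 : ∑' j : ℕ, ENNReal.ofReal ((2:ℝ) ^ (-((j:ℝ) * s))) * a (k + j) =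
        ENNReal.ofReal ((2:ℝ) ^ ((k:ℝ) * s)) *
          ∑' j : ℕ, eLpNorm (sconv (dil ψ₀ ((k + j : ℕ) : ℤ)) u) p₁ volume := by
      rw [← ENNReal.tsum_mul_left]
      congr 1
      ext j
      simp only [ha]
      rw [← mul_assoc, two_mul_pow]
      congr 3
      push_cast; ring
    simp only [e2]
    rw [e3]
    refine (mul_le_mul' le_rfl hh).trans ?_
    set X := ∑' j : ℕ, eLpNorm (sconv (dil ψ₀ ((k + j : ℕ) : ℤ)) u) p₁ volume
    set Y := ENNReal.ofReal ((2:ℝ) ^ ((k:ℝ) * s))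
    calc t2 * Y * (L * (1 + Q) * eLpNorm u r volume * X)
        ≤ t2 * Y * (L * (1 + Q) * (C2 * B) * X) := by gcongr
      _ = _ := by rw [hD]; ring
end
end

section
/- Let n ≥ 1, 1 ≤ p₁ ≤ p₂ < ∞, 0 < s₁ ≤ s₂ < ∞, and q ∈ [1,∞). Then there is a constant C > 0 such that for every Schwartz function u on ℝⁿ and every t ∈ (0,1], ‖e^{tΔ}u‖_{B^{s₂}_{p₂,q}} ≤ C t^{−(s₂ − s₁ + n/p₁ − n/p₂)/2} ‖u‖_{B^{s₁}_{p₁,q}}. -/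
open MeasureTheory Real Filter
open scoped ENNReal FourierTransform

noncomputable section

variable {n : ℕ}

lemma gaussian_schwartz (c : ℝ) (hc : 0 < c) :
    ∃ G : SchwartzMap (Rn n) ℝ, ∀ x, G x = Real.exp (-c * ‖x‖ ^ 2) := by
  have htemp : Function.HasTemperateGrowth (fun x : Rn n => -c * ‖x‖ ^ 2) :=
    (Function.HasTemperateGrowth.const (-c)).mul
      (Function.hasTemperateGrowth_norm_sq (H := Rn n))
  refine ⟨⟨fun x => Real.exp (-c * ‖x‖ ^ 2), ?_, ?_⟩, fun x => rfl⟩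
  · exact Real.contDiff_exp.comp htemp.1
  · intro k m
    obtain ⟨l, K, hK, hb⟩ := htemp.norm_iteratedFDeriv_le_uniform m
    -- bound of polynomial times gaussian
    have hpoly : ∃ D : ℝ, ∀ r : ℝ, 0 ≤ r → (1 + r) ^ (k + l * m) * Real.exp (-c * r ^ 2) ≤ D := by
      have h1 : Continuous (fun r : ℝ => (1 + r) ^ (k + l * m) * Real.exp (-c * r ^ 2)) := by
        fun_prop
      have h2 : Tendsto (fun r : ℝ => (1 + r) ^ (k + l * m) * Real.exp (-c * r ^ 2)) atTop
          (nhds 0) := by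
        have h3 : Tendsto (fun r : ℝ => r ^ (k + l * m) * Real.exp (-c * r)) atTop (nhds 0) := by
          have := tendsto_rpow_mul_exp_neg_mul_atTop_nhds_zero ((k + l * m : ℕ) : ℝ) c hc
          simpa only [Real.rpow_natCast] using this
        have h4 : Tendsto (fun r : ℝ => Real.exp (2 * c) * ((1 + r) ^ (k + l * m)
            * Real.exp (-c * (1 + r)))) atTop (nhds 0) := by
          have := (h3.comp (tendsto_atTop_add_const_left atTop (1:ℝ) tendsto_id)).const_mul
            (Real.exp (2 * c))
          simpa using this
        refine squeeze_zero' ?_ ?_ h4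
        · filter_upwards [eventually_ge_atTop (0:ℝ)] with r hr
          positivity
        · filter_upwards [eventually_ge_atTop (0:ℝ)] with r hr
          have : Real.exp (-c * r ^ 2) ≤ Real.exp (2 * c) * Real.exp (-c * (1 + r)) := by
            rw [← Real.exp_add]
            apply Real.exp_le_exp.2
            nlinarith [mul_nonneg hc.le (sq_nonneg (r - 1)), mul_nonneg hc.le hr,
              mul_nonneg hc.le (sq_nonneg (r - 1/2))]
          calc _ ≤ (1 + r) ^ (k + l * m) * (Real.exp (2 * c) * Real.exp (-c * (1 + r))) := by
                gcongr
            _ = _ := by ring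
      obtain ⟨R, hR⟩ := eventually_atTop.1 (h2.eventually (gt_mem_nhds (zero_lt_one)))
      obtain ⟨D, hD⟩ := (isCompact_Icc (a := (0:ℝ)) (b := max R 0)).bddAbove_image h1.continuousOn
      refine ⟨max D 1, fun r hr => ?_⟩
      rcases le_total r (max R 0) with h | h
      · exact le_max_of_le_left (hD ⟨r, ⟨hr, h⟩, rfl⟩)
      · exact le_max_of_le_right (hR r (le_trans (le_max_left _ _) h)).le
    obtain ⟨D, hD⟩ := hpoly
    refine ⟨m.factorial * (1 + K) ^ m * D, fun x => ?_⟩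
    have hx1 : 1 ≤ 1 + ‖x‖ := by linarith [norm_nonneg x]
    have hcomp := norm_iteratedFDeriv_comp_le (𝕜 := ℝ) (g := Real.exp)
      (f := fun x : Rn n => -c * ‖x‖ ^ 2) (n := m) (N := ⊤) Real.contDiff_exp
      (by
        have : ContDiff ℝ ⊤ (fun x : Rn n => ‖x‖ ^ 2) := contDiff_norm_sq ℝ
        exact contDiff_const.mul this) (by exact le_top) x
      (C := Real.exp (-c * ‖x‖ ^ 2)) (D := (1 + K) * (1 + ‖x‖) ^ l)
      (by
        intro i hi
        rw [norm_iteratedFDeriv_eq_norm_iteratedDeriv]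
        rw [iteratedDeriv_eq_iterate, Real.iter_deriv_exp]
        simp)
      (by
        intro i hi him
        refine (hb i him x).trans ?_
        have : 1 ≤ (1 + K) * (1 + ‖x‖) ^ l := by
          have : 1 ≤ (1 + ‖x‖) ^ l := one_le_pow₀ hx1
          nlinarith
        calc _ ≤ (1 + K) * (1 + ‖x‖) ^ l := by gcongr; linarith
          _ ≤ _ := le_self_pow₀ this (by omega))
    have hcomp' : ‖iteratedFDeriv ℝ m (fun x : Rn n => Real.exp (-c * ‖x‖ ^ 2)) x‖ ≤
      m.factorial * Real.exp (-c * ‖x‖ ^ 2) * ((1 + K) * (1 + ‖x‖) ^ l) ^ m := hcomp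
    calc ‖x‖ ^ k * ‖iteratedFDeriv ℝ m (fun x : Rn n => Real.exp (-c * ‖x‖ ^ 2)) x‖
        ≤ (1 + ‖x‖) ^ k * (m.factorial * Real.exp (-c * ‖x‖ ^ 2) *
          ((1 + K) * (1 + ‖x‖) ^ l) ^ m) := by
          gcongr
          linarith
      _ = m.factorial * (1 + K) ^ m * ((1 + ‖x‖) ^ (k + l * m) * Real.exp (-c * ‖x‖ ^ 2)) := by
          rw [mul_pow, ← pow_mul, pow_add]; ring
      _ ≤ _ := by
          gcongr
          exact hD _ (norm_nonneg x)

lemma young_lintegral (p₁ p₂ : ℝ) (h1 : 1 ≤ p₁) (h12 : p₁ ≤ p₂) (a g : Rn n → ℝ≥0∞)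
    (ha : Measurable a) (hg : Measurable g) (L M : ℝ≥0∞)
    (hL : ∫⁻ y, a y ≤ L) (hM : ∀ y, a y ≤ M) :
    (∫⁻ x, (∫⁻ y, a y * g (x - y)) ^ p₂) ^ (1 / p₂) ≤
      L ^ (1 - (1 / p₁ - 1 / p₂)) * M ^ (1 / p₁ - 1 / p₂) * (∫⁻ x, g x ^ p₁) ^ (1 / p₁) := by
  have hp1 : 0 < p₁ := by linarith
  have hp2 : 0 < p₂ := by linarith
  have hinv : 1 / p₁ ≤ 1 := by rw [div_le_one hp1]; exact h1
  have hmeas2 : Measurable (fun z : Rn n × Rn n => a z.2 * g (z.1 - z.2) ^ p₁) := by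
    fun_prop
  set F : Rn n → ℝ≥0∞ := fun x => ∫⁻ y, a y * g (x - y) with hF
  set I : Rn n → ℝ≥0∞ := fun x => ∫⁻ y, a y * g (x - y) ^ p₁ with hI
  set T : ℝ≥0∞ := ∫⁻ x, g x ^ p₁ with hT
  have step1 : ∀ x, F x ≤ I x ^ (1 / p₁) * L ^ (1 - 1 / p₁) := by
    intro x
    have := eLpNorm'_le_eLpNorm'_mul_rpow_measure_univ (μ := volume.withDensity a)
      (f := fun y => g (x - y)) (p := 1) (q := p₁) one_pos h1
      (by
        apply Measurable.aestronglyMeasurable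
        fun_prop)
    simp only [eLpNorm', enorm_eq_self, ENNReal.rpow_one, div_one] at this
    rw [lintegral_withDensity_eq_lintegral_mul _ ha (by fun_prop),
      lintegral_withDensity_eq_lintegral_mul _ ha (by fun_prop),
      withDensity_apply _ MeasurableSet.univ, Measure.restrict_univ] at this
    refine this.trans ?_
    gcongr
    exact le_of_eq rfl
  have step1' : ∀ x, F x ^ p₁ ≤ I x * L ^ (p₁ - 1) := by
    intro x
    calc F x ^ p₁ ≤ (I x ^ (1 / p₁) * L ^ (1 - 1 / p₁)) ^ p₁ := by gcongr; exact step1 x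
      _ = _ := by
        rw [ENNReal.mul_rpow_of_nonneg _ _ hp1.le, ← ENNReal.rpow_mul, ← ENNReal.rpow_mul]
        congr 2
        · field_simp; simp
        · field_simp
  have hIint : ∫⁻ x, I x ≤ L * T := by
    calc ∫⁻ x, I x = ∫⁻ y, ∫⁻ x, a y * g (x - y) ^ p₁ := by
          rw [hI, lintegral_lintegral_swap]
          exact hmeas2.aemeasurable
      _ = ∫⁻ y, a y * T := by
          congr 1 with y
          rw [lintegral_const_mul _ (by fun_prop)]
          rw [lintegral_sub_right_eq_self (fun x => g x ^ p₁) y]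
      _ = (∫⁻ y, a y) * T := by rw [lintegral_mul_const _ ha]
      _ ≤ _ := by gcongr
  have hImeas : Measurable I := by
    exact Measurable.lintegral_prod_right' hmeas2
  have step2 : ∫⁻ x, F x ^ p₁ ≤ L ^ p₁ * T := by
    calc ∫⁻ x, F x ^ p₁ ≤ ∫⁻ x, I x * L ^ (p₁ - 1) := lintegral_mono step1'
      _ = (∫⁻ x, I x) * L ^ (p₁ - 1) := lintegral_mul_const _ hImeas
      _ ≤ (L * T) * L ^ (p₁ - 1) := by gcongr
      _ = (L ^ (1:ℝ) * L ^ (p₁ - 1)) * T := by rw [ENNReal.rpow_one]; ring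
      _ = _ := by
        rw [← ENNReal.rpow_add_of_nonneg _ _ zero_le_one (by linarith)]
        congr 2; ring
  have step3 : ∀ x, F x ≤ M ^ (1 / p₁) * T ^ (1 / p₁) * L ^ (1 - 1 / p₁) := by
    intro x
    refine (step1 x).trans ?_
    rw [← ENNReal.mul_rpow_of_nonneg _ _ (by positivity)]
    gcongr
    calc I x ≤ ∫⁻ y, M * g (x - y) ^ p₁ := by
          apply lintegral_mono; intro y; dsimp only; gcongr; exact hM y
      _ = M * ∫⁻ y, g (x - y) ^ p₁ := lintegral_const_mul _ (by fun_prop)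
      _ = _ := by rw [lintegral_sub_left_eq_self (fun x => g x ^ p₁) x]
  have hFmeas : Measurable F := by
    apply Measurable.lintegral_prod_right' (f := fun z : Rn n × Rn n => a z.2 * g (z.1 - z.2))
    fun_prop
  set S := M ^ (1 / p₁) * T ^ (1 / p₁) * L ^ (1 - 1 / p₁) with hS
  have step4 : ∫⁻ x, F x ^ p₂ ≤ S ^ (p₂ - p₁) * (L ^ p₁ * T) := by
    calc ∫⁻ x, F x ^ p₂ = ∫⁻ x, F x ^ (p₂ - p₁) * F x ^ p₁ := by
          congr 1 with x
          rw [← ENNReal.rpow_add_of_nonneg _ _ (by linarith) hp1.le]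
          congr 1; ring
      _ ≤ ∫⁻ x, S ^ (p₂ - p₁) * F x ^ p₁ := by
          apply lintegral_mono; intro x; dsimp only; gcongr
          exact step3 x
      _ = S ^ (p₂ - p₁) * ∫⁻ x, F x ^ p₁ := lintegral_const_mul _ (by fun_prop)
      _ ≤ _ := by gcongr
  calc (∫⁻ x, F x ^ p₂) ^ (1 / p₂) ≤ (S ^ (p₂ - p₁) * (L ^ p₁ * T)) ^ (1 / p₂) := by gcongr
    _ = (L ^ ((1 - 1 / p₁) * (p₂ - p₁) * (1 / p₂)) * L ^ (p₁ * (1 / p₂))) *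
        M ^ ((1 / p₁) * (p₂ - p₁) * (1 / p₂)) *
        (T ^ ((1 / p₁) * (p₂ - p₁) * (1 / p₂)) * T ^ (1 / p₂)) := by
      have e1 : 0 ≤ 1 / p₂ := by positivity
      have e2 : 0 ≤ p₂ - p₁ := by linarith
      rw [hS]
      simp only [ENNReal.mul_rpow_of_nonneg _ _ e1, ENNReal.mul_rpow_of_nonneg _ _ e2,
        ← ENNReal.rpow_mul]
      ring
    _ = _ := by
      have e1 : 0 ≤ 1 / p₂ := by positivity
      have e2 : 0 ≤ p₂ - p₁ := by linarith
      have e3 : 0 ≤ 1 / p₁ := by positivity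
      have e4 : 0 ≤ 1 - 1 / p₁ := by linarith
      rw [← ENNReal.rpow_add_of_nonneg _ _ (by positivity) (by positivity),
        ← ENNReal.rpow_add_of_nonneg _ _ (by positivity) (by positivity)]
      have q1 : (1 - 1 / p₁) * (p₂ - p₁) * (1 / p₂) + p₁ * (1 / p₂)
          = 1 - (1 / p₁ - 1 / p₂) := by field_simp; ring
      have q2 : 1 / p₁ * (p₂ - p₁) * (1 / p₂) = 1 / p₁ - 1 / p₂ := by field_simp
      have q3 : 1 / p₁ * (p₂ - p₁) * (1 / p₂) + 1 / p₂ = 1 / p₁ := by field_simp; ring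
      rw [q1, q3, q2]

lemma young_conv (p₁ p₂ : ℝ≥0∞) (h1 : 1 ≤ p₁) (h12 : p₁ ≤ p₂) (h2 : p₂ < ∞) (A g : Rn n → ℂ)
    (hA : Continuous A) (hg : Continuous g) (L M : ℝ≥0∞)
    (hL : ∫⁻ y, ‖A y‖ₑ ≤ L) (hM : ∀ y, ‖A y‖ₑ ≤ M) :
    eLpNorm (MeasureTheory.convolution A g (ContinuousLinearMap.mul ℂ ℂ) volume) p₂ volume ≤
      L ^ (1 - (1 / p₁.toReal - 1 / p₂.toReal)) * M ^ (1 / p₁.toReal - 1 / p₂.toReal) *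
        eLpNorm g p₁ volume := by
  have h1t : p₁ ≠ ∞ := (h12.trans_lt h2).ne
  have h1r : 1 ≤ p₁.toReal := by
    rw [← ENNReal.toReal_one]; exact ENNReal.toReal_mono h1t h1
  have h12r : p₁.toReal ≤ p₂.toReal := ENNReal.toReal_mono h2.ne h12
  have h10 : p₁ ≠ 0 := (lt_of_lt_of_le zero_lt_one h1).ne'
  have h20 : p₂ ≠ 0 := (lt_of_lt_of_le zero_lt_one (h1.trans h12)).ne'
  rw [eLpNorm_eq_lintegral_rpow_enorm_toReal h20 h2.ne,
    eLpNorm_eq_lintegral_rpow_enorm_toReal h10 h1t]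
  refine le_trans ?_ (young_lintegral p₁.toReal p₂.toReal h1r h12r (fun y => ‖A y‖ₑ)
    (fun y => ‖g y‖ₑ) (by fun_prop) (by fun_prop) L M hL hM)
  gcongr with x
  refine (enorm_integral_le_lintegral_enorm _).trans (le_of_eq ?_)
  congr 1 with y
  simp [enorm_mul]

structure Nice (g : Rn n → ℂ) : Prop where
  cont : Continuous g
  int : Integrable g
  bdd : ∃ C : ℝ, ∀ x, ‖g x‖ ≤ C

lemma Nice.conv {A g : Rn n → ℂ} (hA : Integrable A) (hg : Nice g) :
    Nice (MeasureTheory.convolution A g (ContinuousLinearMap.mul ℂ ℂ) volume) := by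
  obtain ⟨C, hC⟩ := hg.bdd
  refine ⟨?_, ?_, ?_⟩
  · apply BddAbove.continuous_convolution_right_of_integrable
      ((ContinuousLinearMap.mul ℂ ℂ).bilinearRestrictScalars ℝ) _ hA hg.cont
    exact ⟨C, by rintro _ ⟨x, rfl⟩; exact hC x⟩
  · exact MeasureTheory.Integrable.integrable_convolution
      ((ContinuousLinearMap.mul ℂ ℂ).bilinearRestrictScalars ℝ) hA hg.int
  · refine ⟨∫ y, ‖A y‖ * C, fun x => ?_⟩
    refine norm_integral_le_of_norm_le (hA.norm.mul_const C) ?_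
    filter_upwards with y
    simp only [ContinuousLinearMap.mul_apply', norm_mul]
    gcongr
    exact hC _

lemma ofReal_conv (k f : Rn n → ℝ) :
    (fun x => ((MeasureTheory.convolution k f (ContinuousLinearMap.mul ℝ ℝ) volume x : ℝ) : ℂ)) =
    MeasureTheory.convolution (fun x => (k x : ℂ)) (fun x => (f x : ℂ))
      (ContinuousLinearMap.mul ℂ ℂ) volume := by
  ext x
  simp only [MeasureTheory.convolution, ContinuousLinearMap.mul_apply']
  rw [← integral_complex_ofReal]
  simp

lemma nice_unique {f g : Rn n → ℂ} (hf : Nice f) (hg : Nice g) (h : ∀ ξ, 𝓕 f ξ = 𝓕 g ξ) :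
    f = g := by
  have h0 : 𝓕 (f - g) = 0 := by
    ext ξ
    have : 𝓕 (f - g) ξ = 𝓕 f ξ - 𝓕 g ξ := by
      simp only [Real.fourier_eq, Pi.sub_apply, smul_sub]
      exact integral_sub ((Real.fourierIntegral_convergent_iff ξ).2 hf.int)
        ((Real.fourierIntegral_convergent_iff ξ).2 hg.int)
    rw [this, h]; simp
  have := (hf.cont.sub hg.cont).fourierInv_fourier_eq (hf.int.sub hg.int)
    (by change Integrable (𝓕 (f - g)); rw [h0]; exact integrable_zero _ _ _)
  have h1 : f - g = 0 := by
    rw [← this]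
    rw [h0]
    ext x
    simp [Real.fourierInv_eq]
  exact sub_eq_zero.1 h1

lemma fourier_dilate (f : Rn n → ℂ) (r : ℝ) (hr : 0 < r) (ξ : Rn n) :
    𝓕 (fun x => ((r ^ n : ℝ) : ℂ) * f (r • x)) ξ = 𝓕 f (r⁻¹ • ξ) := by
  simp only [Real.fourier_eq]
  have := Measure.integral_comp_smul (volume : Measure (Rn n))
    (fun v => Real.fourierChar (-inner ℝ v (r⁻¹ • ξ)) • f v) r
  have h2 : ∀ x : Rn n, inner ℝ (r • x) (r⁻¹ • ξ) = inner ℝ x ξ := by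
    intro x
    rw [inner_smul_left, inner_smul_right]
    simp; field_simp
  simp only [h2, finrank_euclideanSpace, Fintype.card_fin] at this
  have h3 : ∀ v : Rn n, Real.fourierChar (-inner ℝ v ξ) • (((r ^ n : ℝ) : ℂ) * f (r • v)) =
      ((r ^ n : ℝ) : ℂ) * (Real.fourierChar (-inner ℝ v ξ) • f (r • v)) := by
    intro v; simp only [Circle.smul_def, smul_eq_mul]; ring
  simp only [h3]
  rw [integral_const_mul, this, abs_of_pos (by positivity), Complex.real_smul, ← mul_assoc,
    ← Complex.ofReal_mul, mul_inv_cancel₀ (by positivity)]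
  simp

lemma multiplier (p₁ p₂ : ℝ≥0∞) (h1 : 1 ≤ p₁) (h12 : p₁ ≤ p₂) (h2 : p₂ < ∞)
    (a : SchwartzMap (Rn n) ℂ) :
    ∃ C : ℝ, 0 < C ∧ ∀ r : ℝ, 0 < r → ∀ g : Rn n → ℂ, Nice g →
      ∃ g' : Rn n → ℂ, Nice g' ∧ (∀ ξ, 𝓕 g' ξ = a (r⁻¹ • ξ) * 𝓕 g ξ) ∧
        eLpNorm g' p₂ volume ≤
          ENNReal.ofReal (C * r ^ ((n:ℝ) / p₁.toReal - (n:ℝ) / p₂.toReal)) *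
            eLpNorm g p₁ volume := by
  have h1t : p₁ ≠ ∞ := (h12.trans_lt h2).ne
  have h1r : 1 ≤ p₁.toReal := by
    rw [← ENNReal.toReal_one]; exact ENNReal.toReal_mono h1t h1
  have h12r : p₁.toReal ≤ p₂.toReal := ENNReal.toReal_mono h2.ne h12
  set β := 1 / p₁.toReal - 1 / p₂.toReal with hβ
  have hβ0 : 0 ≤ β := by
    rw [hβ, sub_nonneg]; exact one_div_le_one_div_of_le (by linarith) h12r
  have hβ1 : 0 ≤ 1 - β := by
    have : 1 / p₁.toReal ≤ 1 := by rw [div_le_one (by linarith)]; exact h1r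
    have : 0 ≤ 1 / p₂.toReal := by positivity
    linarith
  set A0 : SchwartzMap (Rn n) ℂ := 𝓕⁻ a with hA0
  have hFA : ∀ ξ, 𝓕 (fun x => A0 x) ξ = a ξ := by
    intro ξ
    have : 𝓕 A0 = a := FourierTransform.fourier_fourierInv_eq a
    rw [← this, SchwartzMap.fourier_coe]
  obtain ⟨M, hM0, hM⟩ : ∃ M : ℝ, 0 < M ∧ ∀ x, ‖A0 x‖ ≤ M := by
    obtain ⟨M, hM, h⟩ := A0.decay 0 0
    exact ⟨M, hM, fun x => by simpa using h x⟩
  set L : ℝ := ∫ x, ‖A0 x‖ with hL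
  have hL0 : 0 ≤ L := integral_nonneg fun _ => norm_nonneg _
  refine ⟨(L + 1) ^ (1 - β) * M ^ β, by positivity, fun r hr g hg => ?_⟩
  set A : Rn n → ℂ := fun x => ((r ^ n : ℝ) : ℂ) * A0 (r • x) with hA
  have hAi : Integrable A :=
    ((integrable_comp_smul_iff volume A0 hr.ne').2 A0.integrable).const_mul _
  have hAc : Continuous A := by
    have := A0.continuous
    fun_prop
  refine ⟨_, hg.conv hAi, fun ξ => ?_, ?_⟩
  · rw [Real.fourier_mul_convolution_eq hAi hg.int, hA, fourier_dilate _ r hr, hFA]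
  · have hlin : ∫⁻ y, ‖A y‖ₑ ≤ ENNReal.ofReal (L + 1) := by
      rw [← ofReal_integral_norm_eq_lintegral_enorm hAi]
      apply ENNReal.ofReal_le_ofReal
      have : ∫ x, ‖A x‖ = L := by
        simp only [hA, norm_mul, Complex.norm_real]
        rw [integral_const_mul, Measure.integral_comp_smul volume (fun x => ‖A0 x‖) r]
        simp only [finrank_euclideanSpace, Fintype.card_fin, smul_eq_mul]
        rw [abs_of_pos (by positivity), Real.norm_of_nonneg (by positivity), ← mul_assoc,
          mul_inv_cancel₀ (by positivity), one_mul]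
      linarith
    have hsup : ∀ y, ‖A y‖ₑ ≤ ENNReal.ofReal (r ^ n * M) := by
      intro y
      rw [← ofReal_norm]
      apply ENNReal.ofReal_le_ofReal
      simp only [hA, norm_mul, Complex.norm_real]
      rw [Real.norm_of_nonneg (by positivity)]
      gcongr
      exact hM _
    refine (young_conv p₁ p₂ h1 h12 h2 A g hAc hg.cont _ _ hlin hsup).trans (le_of_eq ?_)
    rw [← hβ, ENNReal.ofReal_rpow_of_nonneg (by positivity) hβ1,
      ENNReal.ofReal_rpow_of_nonneg (by positivity) hβ0, ← ENNReal.ofReal_mul (by positivity)]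
    congr 2
    rw [Real.mul_rpow (by positivity) hM0.le, ← Real.rpow_natCast, ← Real.rpow_mul hr.le]
    have : (n:ℝ) * β = (n:ℝ) / p₁.toReal - (n:ℝ) / p₂.toReal := by rw [hβ]; ring
    rw [this]; ring

lemma heat_kernel_int (t : ℝ) (ht : 0 < t) : Integrable (fun x : Rn n =>
    (((4 * π * t) ^ (-(n:ℝ)/2) * Real.exp (-‖x‖^2 / (4*t)) : ℝ) : ℂ)) := by
  obtain ⟨G, hG⟩ := gaussian_schwartz (n := n) (1 / (4 * t)) (by positivity)
  have : Integrable (fun x : Rn n => Real.exp (-‖x‖^2 / (4*t))) := by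
    refine G.integrable.congr (Eventually.of_forall fun x => ?_)
    simp only [hG]
    congr 1
    ring
  exact (this.const_mul _).ofReal

lemma heat_kernel_ft (t : ℝ) (ht : 0 < t) (ξ : Rn n) : 𝓕 (fun x : Rn n =>
    (((4 * π * t) ^ (-(n:ℝ)/2) * Real.exp (-‖x‖^2 / (4*t)) : ℝ) : ℂ)) ξ =
    ((Real.exp (-(4 * π ^ 2 * t) * ‖ξ‖ ^ 2) : ℝ) : ℂ) := by
  have h := fourier_gaussian_innerProductSpace (V := Rn n) (b := ((1 / (4 * t) : ℝ) : ℂ))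
    (by rw [Complex.ofReal_re]; positivity) ξ
  have e1 : (fun x : Rn n => (((4 * π * t) ^ (-(n:ℝ)/2) * Real.exp (-‖x‖^2 / (4*t)) : ℝ) : ℂ)) =
      (((4 * π * t) ^ (-(n:ℝ)/2) : ℝ) : ℂ) •
        (fun v : Rn n => Complex.exp (-((1 / (4 * t) : ℝ) : ℂ) * ‖v‖ ^ 2)) := by
    ext x
    simp only [Pi.smul_apply, smul_eq_mul, Complex.ofReal_mul, Complex.ofReal_exp]
    congr 2
    push_cast
    ring
  have e2 : ((π : ℂ) / ((1 / (4 * t) : ℝ) : ℂ)) ^ (Module.finrank ℝ (Rn n) / 2 : ℂ) =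
      (((4 * π * t) ^ ((n:ℝ)/2) : ℝ) : ℂ) := by
    rw [Complex.ofReal_cpow (by positivity)]
    congr 1
    · push_cast; field_simp
    · simp
  rw [e1]
  have e3 : ∀ (c : ℂ) (f : Rn n → ℂ), 𝓕 (c • f) ξ = c * 𝓕 f ξ := by
    intro c f
    simp only [Real.fourier_eq, Pi.smul_apply]
    rw [← integral_const_mul]
    congr 1 with v
    simp only [Circle.smul_def, smul_eq_mul]; ring
  rw [e3, h, e2, ← mul_assoc, ← Complex.ofReal_mul, ← Real.rpow_add (by positivity)]
  have : -(n:ℝ)/2 + (n:ℝ)/2 = 0 := by ring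
  rw [this, Real.rpow_zero, Complex.ofReal_one, one_mul, Complex.ofReal_exp]
  congr 1
  push_cast
  have : (t : ℂ) ≠ 0 := by exact_mod_cast ht.ne'
  field_simp

lemma symbol_a (N : ℕ) : ∃ a : SchwartzMap (Rn n) ℂ, ∀ ξ : Rn n, ‖ξ‖ ≤ 2 →
    (N = 0 ∨ 1/2 ≤ ‖ξ‖) → a ξ = ((((‖ξ‖ ^ 2) ^ N)⁻¹ : ℝ) : ℂ) := by
  let χ : ContDiffBump (0 : Rn n) := ⟨2, 3, by norm_num, by norm_num⟩
  let η : ContDiffBump (0 : Rn n) := ⟨1/4, 1/2, by norm_num, by norm_num⟩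
  have hpos : ∀ ξ : Rn n, 0 < ‖ξ‖ ^ 2 + η ξ := by
    intro ξ
    by_cases h : ξ = 0
    · subst h
      have : η (0 : Rn n) = 1 := η.one_of_mem_closedBall (by simp [η])
      rw [this]; simp
    · have := η.nonneg (x := ξ)
      have : 0 < ‖ξ‖ := norm_pos_iff.2 h
      positivity
  let f : Rn n → ℂ := fun ξ => ((χ ξ * ((‖ξ‖ ^ 2 + η ξ) ^ N)⁻¹ : ℝ) : ℂ)
  have hf1 : ContDiff ℝ (⊤ : ℕ∞) f := by
    have h1 : ContDiff ℝ (⊤ : ℕ∞) (fun ξ : Rn n => ‖ξ‖ ^ 2 + η ξ) :=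
      (contDiff_norm_sq ℝ).add η.contDiff
    exact Complex.ofRealCLM.contDiff.comp
      (χ.contDiff.mul ((h1.pow N).inv fun ξ => (pow_pos (hpos ξ) N).ne'))
  have hf2 : HasCompactSupport f := by
    have : HasCompactSupport (fun ξ => χ ξ * ((‖ξ‖ ^ 2 + η ξ) ^ N)⁻¹) :=
      χ.hasCompactSupport.mul_right
    exact this.comp_left (g := fun r : ℝ => (r : ℂ)) Complex.ofReal_zero
  refine ⟨hf2.toSchwartzMap hf1, fun ξ h2 h => ?_⟩
  rw [HasCompactSupport.toSchwartzMap_toFun]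
  simp only [f]
  have hχ : χ ξ = 1 := χ.one_of_mem_closedBall (by simpa [χ] using h2)
  rw [hχ, one_mul]
  rcases h with h | h
  · subst h; simp
  · have : η ξ = 0 := η.zero_of_le_dist (by simpa [η] using h)
    rw [this, add_zero]

lemma symbol_b (N : ℕ) : ∃ b : SchwartzMap (Rn n) ℂ, ∀ ξ : Rn n,
    b ξ = (((‖ξ‖ ^ 2) ^ N * Real.exp (-(4 * π ^ 2) * ‖ξ‖ ^ 2) : ℝ) : ℂ) := by
  obtain ⟨G, hG⟩ := gaussian_schwartz (n := n) (4 * π ^ 2) (by positivity)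
  have ht : Function.HasTemperateGrowth (fun x : Rn n => (‖x‖ ^ 2) ^ N) :=
    (Function.hasTemperateGrowth_norm_sq (H := Rn n)).pow N
  refine ⟨SchwartzMap.postcompCLM (𝕜 := ℝ) Complex.ofRealCLM
    (SchwartzMap.smulLeftCLM ℝ (fun x : Rn n => (‖x‖ ^ 2) ^ N) G), fun ξ => ?_⟩
  rw [SchwartzMap.postcompCLM_apply, SchwartzMap.smulLeftCLM_apply_apply ht, hG]
  simp

lemma Schwartz_nice (u : SchwartzMap (Rn n) ℝ) : Nice (fun x => (u x : ℂ)) := by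
  refine ⟨?_, u.integrable.ofReal, ?_⟩
  · have := u.continuous
    fun_prop
  · obtain ⟨M, hM, h⟩ := u.decay 0 0
    exact ⟨M, fun x => by simpa using h x⟩

lemma core (N : ℕ) (p₁ p₂ : ℝ≥0∞) (h1 : 1 ≤ p₁) (h12 : p₁ ≤ p₂) (h2 : p₂ < ∞) :
    ∃ C : ℝ, 0 < C ∧ ∀ r : ℝ, 0 < r → ∀ t : ℝ, 0 < t → ∀ k : Rn n → ℝ, Integrable k →
      (∀ ξ, 𝓕 (fun x => (k x : ℂ)) ξ ≠ 0 → ‖ξ‖ ≤ 2 * r ∧ (N = 0 ∨ r / 2 ≤ ‖ξ‖)) →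
      ∀ u : SchwartzMap (Rn n) ℝ,
      eLpNorm (MeasureTheory.convolution k (heatOp n t (fun x => u x))
          (ContinuousLinearMap.mul ℝ ℝ) volume) p₂ volume ≤
        ENNReal.ofReal (C * ((t * r ^ 2) ^ N)⁻¹ *
          r ^ ((n:ℝ) / p₁.toReal - (n:ℝ) / p₂.toReal)) *
        eLpNorm (MeasureTheory.convolution k (fun x => u x)
          (ContinuousLinearMap.mul ℝ ℝ) volume) p₁ volume := by
  obtain ⟨a, ha⟩ := symbol_a (n := n) N
  obtain ⟨b, hb⟩ := symbol_b (n := n) N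
  obtain ⟨C1, hC1, H1⟩ := multiplier p₁ p₂ h1 h12 h2 a
  obtain ⟨C2, hC2, H2⟩ := multiplier p₁ p₁ h1 le_rfl (h12.trans_lt h2) b
  refine ⟨C1 * C2, by positivity, fun r hr t ht k hk hsupp u => ?_⟩
  have eLp : ∀ (f : Rn n → ℝ) (p : ℝ≥0∞),
      eLpNorm f p volume = eLpNorm (fun x => (f x : ℂ)) p volume := by
    intro f p
    exact eLpNorm_congr_norm_ae (Eventually.of_forall fun x => by simp)
  rw [eLp, eLp, ofReal_conv, ofReal_conv]
  have hheat : (fun x => ((heatOp n t (fun x => u x) x : ℝ) : ℂ)) = _ := ofReal_conv _ _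
  have hkc : Integrable (fun x => (k x : ℂ)) := hk.ofReal
  have hu := Schwartz_nice u
  have hhi := heat_kernel_int (n := n) t ht
  rw [hheat]
  set hu' := MeasureTheory.convolution (fun x : Rn n =>
      (((4 * π * t) ^ (-(n:ℝ)/2) * Real.exp (-‖x‖^2 / (4*t)) : ℝ) : ℂ)) (fun x => (u x : ℂ))
    (ContinuousLinearMap.mul ℂ ℂ) volume with hhu'
  have hnice : Nice hu' := hu.conv hhi
  set g := MeasureTheory.convolution (fun x => (k x : ℂ)) (fun x => (u x : ℂ))
    (ContinuousLinearMap.mul ℂ ℂ) volume with hg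
  have hgn : Nice g := hu.conv hkc
  have hst : 0 < (√t)⁻¹ := by positivity
  obtain ⟨g1, hg1, hF1, hE1⟩ := H2 (√t)⁻¹ hst g hgn
  obtain ⟨g2, hg2, hF2, hE2⟩ := H1 r hr g1 hg1
  have hc0 : 0 < ((t * r ^ 2) ^ N)⁻¹ := by positivity
  set c : ℂ := ((((t * r ^ 2) ^ N)⁻¹ : ℝ) : ℂ) with hc
  have key : MeasureTheory.convolution (fun x => (k x : ℂ)) hu'
      (ContinuousLinearMap.mul ℂ ℂ) volume = c • g2 := by
    apply nice_unique (hnice.conv hkc)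
    · refine ⟨hg2.cont.const_smul c, hg2.int.smul c, ?_⟩
      obtain ⟨D, hD⟩ := hg2.bdd
      refine ⟨‖c‖ * D, fun x => ?_⟩
      rw [Pi.smul_apply, norm_smul]
      gcongr
      exact hD x
    · intro ξ
      have e3 : ∀ (c : ℂ) (f : Rn n → ℂ), 𝓕 (c • f) ξ = c * 𝓕 f ξ := by
        intro c f
        simp only [Real.fourier_eq, Pi.smul_apply]
        rw [← integral_const_mul]
        congr 1 with v
        simp only [Circle.smul_def, smul_eq_mul]; ring
      rw [e3, hF2, hF1, hg, Real.fourier_mul_convolution_eq hkc hnice.int,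
        Real.fourier_mul_convolution_eq hkc hu.int, hhu',
        Real.fourier_mul_convolution_eq hhi hu.int, heat_kernel_ft t ht]
      by_cases hz : 𝓕 (fun x => (k x : ℂ)) ξ = 0
      · rw [hz]; simp
      · obtain ⟨hz1, hz2⟩ := hsupp ξ hz
        rw [inv_inv]
        have hn1 : ‖r⁻¹ • ξ‖ = r⁻¹ * ‖ξ‖ := by
          rw [norm_smul, Real.norm_of_nonneg (by positivity)]
        have hn2 : ‖√t • ξ‖ = √t * ‖ξ‖ := by
          rw [norm_smul, Real.norm_of_nonneg (by positivity)]
        have hav : a (r⁻¹ • ξ) = ((((‖r⁻¹ • ξ‖ ^ 2) ^ N)⁻¹ : ℝ) : ℂ) := by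
          apply ha
          · rw [hn1, inv_mul_le_iff₀ hr]; linarith
          · refine hz2.imp id fun h => ?_
            rw [hn1, le_inv_mul_iff₀ hr]; linarith
        rw [hav, hb, hn1, hn2, hc]
        have : Real.exp (-(4 * π ^ 2 * t) * ‖ξ‖ ^ 2) =
            ((t * r ^ 2) ^ N)⁻¹ * (((r⁻¹ * ‖ξ‖) ^ 2) ^ N)⁻¹ *
            (((√t * ‖ξ‖) ^ 2) ^ N * Real.exp (-(4 * π ^ 2) * (√t * ‖ξ‖) ^ 2)) := by
          have e : Real.exp (-(4 * π ^ 2) * (√t * ‖ξ‖) ^ 2) =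
              Real.exp (-(4 * π ^ 2 * t) * ‖ξ‖ ^ 2) := by
            congr 1
            rw [mul_pow, Real.sq_sqrt ht.le]; ring
          rw [e, mul_pow (√t), Real.sq_sqrt ht.le]
          rcases hz2 with h | h
          · subst h; simp
          · have : 0 < ‖ξ‖ := by linarith
            have : ((t * r ^ 2) ^ N)⁻¹ * (((r⁻¹ * ‖ξ‖) ^ 2) ^ N)⁻¹ * ((t * ‖ξ‖ ^ 2) ^ N) = 1 := by
              rw [← inv_pow, ← inv_pow, ← mul_pow, ← mul_pow]
              convert one_pow N
              field_simp
            rw [← mul_assoc, this, one_mul]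
        rw [this]
        push_cast
        ring
  rw [key, eLpNorm_const_smul]
  have hcn : ‖c‖ₑ = ENNReal.ofReal (((t * r ^ 2) ^ N)⁻¹) := by
    rw [← ofReal_norm, hc, Complex.norm_real, Real.norm_of_nonneg hc0.le]
  rw [sub_self, Real.rpow_zero, mul_one] at hE1
  calc ‖c‖ₑ * eLpNorm g2 p₂ volume ≤ ENNReal.ofReal (((t * r ^ 2) ^ N)⁻¹) *
      (ENNReal.ofReal (C1 * r ^ ((n:ℝ) / p₁.toReal - (n:ℝ) / p₂.toReal)) *
        (ENNReal.ofReal C2 * eLpNorm g p₁ volume)) := by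
        rw [hcn]; gcongr; exact hE2.trans (by gcongr)
    _ = _ := by
        rw [← mul_assoc, ← mul_assoc, ← ENNReal.ofReal_mul (by positivity),
          ← ENNReal.ofReal_mul (by positivity)]
        congr 2; ring

lemma lpKernel_int (ψ₀ : SchwartzMap (Rn n) ℝ) (j : ℤ) : Integrable (lpKernel ψ₀ j) :=
  ((integrable_comp_smul_iff volume ψ₀ (by positivity : ((2:ℝ) ^ j) ≠ 0)).2
    ψ₀.integrable).const_mul _

lemma lpKernel_ft (ψ₀ : SchwartzMap (Rn n) ℝ) (j : ℤ) (ξ : Rn n) :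
    𝓕 (fun x => (lpKernel ψ₀ j x : ℂ)) ξ = ftC ψ₀ (((2:ℝ) ^ j)⁻¹ • ξ) := by
  unfold ftC
  rw [← fourier_dilate (fun x => (ψ₀ x : ℂ)) ((2:ℝ) ^ j) (by positivity) ξ]
  have : (fun x => (lpKernel ψ₀ j x : ℂ)) =
      fun x => ((((2:ℝ) ^ j) ^ n : ℝ) : ℂ) * (ψ₀ ((2:ℝ) ^ j • x) : ℂ) := by
    ext x
    simp only [lpKernel]
    rw [zpow_mul, zpow_natCast, Complex.ofReal_mul]
  rw [this]

lemma lpKernel_supp {ψ₀ : SchwartzMap (Rn n) ℝ} (hψ : IsLPF n ψ₀) (j : ℤ) (ξ : Rn n)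
    (h : 𝓕 (fun x => (lpKernel ψ₀ j x : ℂ)) ξ ≠ 0) :
    ‖ξ‖ ≤ 2 * (2:ℝ) ^ j ∧ (2:ℝ) ^ j / 2 ≤ ‖ξ‖ := by
  rw [lpKernel_ft] at h
  have hr : (0:ℝ) < 2 ^ j := by positivity
  obtain ⟨h1, h2⟩ := hψ.ft_supp _ h
  rw [norm_smul, Real.norm_of_nonneg (by positivity)] at h1 h2
  rw [lt_inv_mul_iff₀ hr] at h1
  rw [inv_mul_lt_iff₀ hr] at h2
  constructor <;> linarith

lemma low_supp {ψ₀ Ψ : SchwartzMap (Rn n) ℝ} (hψ : IsLPF n ψ₀) (hΨ : IsLowPiece ψ₀ Ψ) (ξ : Rn n)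
    (h : 𝓕 (fun x => (Ψ x : ℂ)) ξ ≠ 0) : ‖ξ‖ ≤ 2 := by
  by_contra hlt
  push Not at hlt
  apply h
  have h0 : ξ ≠ 0 := by rintro rfl; simp at hlt; linarith
  have hs := hψ.ft_sum ξ h0
  have hinj : Function.Injective (fun k : ℕ => (k : ℤ)) := Nat.cast_injective
  have hs' : HasSum (fun k : ℕ => ftC ψ₀ ((2:ℝ) ^ (-(k:ℤ)) • ξ)) 1 := by
    refine (hinj.hasSum_iff (f := fun j : ℤ => ftC ψ₀ ((2:ℝ) ^ (-j) • ξ)) ?_).2 hs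
    intro j hj
    by_contra hne
    have h2 := (hψ.ft_supp _ hne).2
    have hneg : j < 0 := by
      by_contra hge
      push Not at hge
      exact hj ⟨j.toNat, by simpa using hge⟩
    rw [norm_smul, Real.norm_of_nonneg (by positivity)] at h2
    have : (1:ℝ) ≤ 2 ^ (-j) := one_le_zpow₀ (by norm_num) (by omega)
    nlinarith [norm_nonneg ξ]
  have := hΨ ξ
  rw [hs'.tsum_eq, sub_self] at this
  exact this

/-- Heat kernel smoothing estimate in Besov spaces: for
`1 ≤ p₁ ≤ p₂ < ∞`, `0 < s₁ ≤ s₂`, `q ∈ [1,∞)` and `t ∈ (0,1]`,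
`‖e^{tΔ}u‖_{B^{s₂}_{p₂,q}} ≤ C t^{−(s₂−s₁+n/p₁−n/p₂)/2} ‖u‖_{B^{s₁}_{p₁,q}}`. -/
theorem besov_heat_smoothing
    (n : ℕ) (hn : 1 ≤ n) (ψ₀ Ψ : SchwartzMap (Rn n) ℝ)
    (hψ : IsLPF n ψ₀) (hΨ : IsLowPiece ψ₀ Ψ)
    (p₁ p₂ : ℝ≥0∞) (hp₁ : 1 ≤ p₁) (hp₁₂ : p₁ ≤ p₂) (hp₂ : p₂ < ∞)
    (s₁ s₂ : ℝ) (hs₁ : 0 < s₁) (hs₁₂ : s₁ ≤ s₂)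
    (q : ℝ≥0∞) (hq : 1 ≤ q) (hq' : q < ∞) :
    ∃ C : ℝ, 0 < C ∧ ∀ u : SchwartzMap (Rn n) ℝ, ∀ t : ℝ, 0 < t → t ≤ 1 →
      besovNorm ψ₀ Ψ s₂ p₂ q (heatOp n t (fun x => u x))
        ≤ ENNReal.ofReal
            (C * t ^ (-(s₂ - s₁ + (n:ℝ)/p₁.toReal - (n:ℝ)/p₂.toReal)/2)) *
          besovNorm ψ₀ Ψ s₁ p₁ q (fun x => u x) := by
  have h1t : p₁ ≠ ∞ := (hp₁₂.trans_lt hp₂).ne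
  have h1r : 1 ≤ p₁.toReal := by
    rw [← ENNReal.toReal_one]; exact ENNReal.toReal_mono h1t hp₁
  have h12r : p₁.toReal ≤ p₂.toReal := ENNReal.toReal_mono hp₂.ne hp₁₂
  have hqr : 1 ≤ q.toReal := by
    rw [← ENNReal.toReal_one]; exact ENNReal.toReal_mono hq'.ne hq
  set B : ℝ := (n:ℝ) / p₁.toReal - (n:ℝ) / p₂.toReal with hB
  have hB0 : 0 ≤ B := by
    rw [hB, sub_nonneg]
    exact div_le_div_of_nonneg_left (by positivity) (by linarith) h12r
  have hexp : -(s₂ - s₁ + (n:ℝ)/p₁.toReal - (n:ℝ)/p₂.toReal)/2 = -((s₂ - s₁ + B) / 2) := by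
    rw [hB]; ring
  rw [hexp]
  set α : ℝ := (s₂ - s₁ + B) / 2 with hα
  have hα0 : 0 ≤ α := by rw [hα]; linarith
  obtain ⟨C0, hC0, H0⟩ := core (n := n) 0 p₁ p₂ hp₁ hp₁₂ hp₂
  obtain ⟨C1, hC1, H1⟩ := core (n := n) ⌈α⌉₊ p₁ p₂ hp₁ hp₁₂ hp₂
  set C := max C0 C1 with hC
  have hCpos : 0 < C := lt_max_of_lt_left hC0
  refine ⟨C, hCpos, fun u t ht ht1 => ?_⟩
  set K : ℝ≥0∞ := ENNReal.ofReal (C * t ^ (-α)) with hK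
  -- low frequency
  have hlow : eLpNorm (MeasureTheory.convolution (fun x => Ψ x) (heatOp n t (fun x => u x))
      (ContinuousLinearMap.mul ℝ ℝ) volume) p₂ volume ≤
      K * eLpNorm (MeasureTheory.convolution (fun x => Ψ x) (fun x => u x)
      (ContinuousLinearMap.mul ℝ ℝ) volume) p₁ volume := by
    refine (H0 1 one_pos t ht (fun x => Ψ x) Ψ.integrable (fun ξ h => ?_) u).trans ?_
    · exact ⟨by simpa using low_supp hψ hΨ ξ h, Or.inl rfl⟩
    · gcongr
      simp only [pow_zero, inv_one, mul_one, Real.one_rpow]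
      have : 1 ≤ t ^ (-α) := Real.one_le_rpow_of_pos_of_le_one_of_nonpos ht ht1 (by linarith)
      apply ENNReal.ofReal_le_ofReal
      calc C0 ≤ C := le_max_left _ _
        _ ≤ _ := le_mul_of_one_le_right hCpos.le this
  have hhigh : ∀ j : ℕ, ENNReal.ofReal ((2:ℝ) ^ ((j:ℝ) * s₂)) *
      eLpNorm (lpProj ψ₀ (j:ℤ) (heatOp n t (fun x => u x))) p₂ volume ≤
      K * (ENNReal.ofReal ((2:ℝ) ^ ((j:ℝ) * s₁)) *
        eLpNorm (lpProj ψ₀ (j:ℤ) (fun x => u x)) p₁ volume) := by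
    intro j
    have hr : (0:ℝ) < (2:ℝ) ^ (j:ℤ) := by positivity
    have hrj : (2:ℝ) ^ (j:ℤ) = (2:ℝ) ^ (j:ℝ) := by
      rw [zpow_natCast, Real.rpow_natCast]
    have hx : 0 < t * ((2:ℝ) ^ (j:ℤ)) ^ 2 := by positivity
    have hmain : eLpNorm (lpProj ψ₀ (j:ℤ) (heatOp n t (fun x => u x))) p₂ volume ≤
        ENNReal.ofReal (C * (t * ((2:ℝ) ^ (j:ℤ)) ^ 2) ^ (-α) * ((2:ℝ) ^ (j:ℤ)) ^ B) *
        eLpNorm (lpProj ψ₀ (j:ℤ) (fun x => u x)) p₁ volume := by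
      rcases le_total (t * ((2:ℝ) ^ (j:ℤ)) ^ 2) 1 with hle | hle
      · refine (H0 _ hr t ht _ (lpKernel_int ψ₀ j)
          (fun ξ h => ⟨(lpKernel_supp hψ j ξ h).1, Or.inl rfl⟩) u).trans ?_
        unfold lpProj
        gcongr
        · exact le_max_left _ _
        · rw [pow_zero, inv_one]
          exact Real.one_le_rpow_of_pos_of_le_one_of_nonpos hx hle (by linarith)
      · refine (H1 _ hr t ht _ (lpKernel_int ψ₀ j)
          (fun ξ h => ⟨(lpKernel_supp hψ j ξ h).1, Or.inr (lpKernel_supp hψ j ξ h).2⟩) u).trans ?_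
        unfold lpProj
        gcongr
        · exact le_max_right _ _
        · rw [← Real.rpow_natCast, ← Real.rpow_neg hx.le]
          exact Real.rpow_le_rpow_of_exponent_le hle (neg_le_neg (Nat.le_ceil α))
    calc _ ≤ ENNReal.ofReal ((2:ℝ) ^ ((j:ℝ) * s₂)) * (ENNReal.ofReal
          (C * (t * ((2:ℝ) ^ (j:ℤ)) ^ 2) ^ (-α) * ((2:ℝ) ^ (j:ℤ)) ^ B) *
          eLpNorm (lpProj ψ₀ (j:ℤ) (fun x => u x)) p₁ volume) := by gcongr
      _ = _ := by
        rw [← mul_assoc, ← mul_assoc, hK, ← ENNReal.ofReal_mul (by positivity),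
          ← ENNReal.ofReal_mul (by positivity)]
        congr 2
        rw [hrj, Real.mul_rpow ht.le (by positivity), ← Real.rpow_natCast,
          ← Real.rpow_mul (by positivity), ← Real.rpow_mul (by positivity),
          ← Real.rpow_mul (by positivity)]
        have e : (2:ℝ) ^ ((j:ℝ) * s₁) = (2:ℝ) ^ ((j:ℝ) * s₂) *
            (2:ℝ) ^ ((j:ℝ) * ((2:ℕ):ℝ) * (-α)) * (2:ℝ) ^ ((j:ℝ) * B) := by
          rw [← Real.rpow_add (by norm_num), ← Real.rpow_add (by norm_num)]
          congr 1
          rw [hα]; push_cast; ring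
        rw [e]; ring
  unfold besovNorm
  rw [if_neg hq'.ne, if_neg hq'.ne, mul_add]
  refine add_le_add hlow ?_
  have hq0 : 0 < q.toReal := by linarith
  have hKq : K = (K ^ q.toReal) ^ (1 / q.toReal) := by
    rw [← ENNReal.rpow_mul, mul_one_div_cancel hq0.ne', ENNReal.rpow_one]
  rw [hKq, ← ENNReal.mul_rpow_of_nonneg _ _ (by positivity), ← ENNReal.tsum_mul_left]
  gcongr with j
  rw [← ENNReal.mul_rpow_of_nonneg _ _ hq0.le]
  exact ENNReal.rpow_le_rpow (hhigh j) hq0.le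
end
end
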